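/- arXiv:2605.27312 — 5 statements merged into one kernel-verified Lean document; each statement's English description precedes it below -/
import Mathlib

section
/- Let m ≥ 4 and 1 ≤ w ≤ m. If 3 divides w and m is even, then the automorphism group of the abelian code C(3,m,{w}) is a subgroup of AÕ(m,3) = Z_3^m ⋊ Õ(m,3) (acting on F_3^m by x ↦ Ax + b with A ∈ Õ(m,3)), and equality holds if and only if (m,w) = (4,3). -/
open Matrix

/-- The automorphism group of a binary code of length `|I|` (as a set of coordinate
permutations): those permutations of the index set that map the code onto itself. -/
def codeAut {I : Type} (C : Set (I → ZMod 2)) : Set (Equiv.Perm I) :=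
  { π | (fun c => c ∘ ⇑π.symm) '' C = C }

/-- The abelian code `C(n, m, W)`: binary vectors indexed by `(Z_n)^m` whose finite-field
DFT (with respect to a primitive `n`-th root of unity `α` in a field `K` of characteristic 2)
vanishes at every frequency `j` whose Hamming weight lies outside `W`. -/
def abelianCode (n m : ℕ) [NeZero n] (W : Set ℕ) (K : Type) [Field K] (α : K) :
    Set ((Fin m → ZMod n) → ZMod 2) :=
  { a | ∀ j : Fin m → ZMod n, hammingNorm j ∉ W →
      ∑ i : Fin m → ZMod n, (if a i = 1 then (1 : K) else 0) * α ^ (∑ k, i k * j k).val = 0 }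

/-- The group `AÕ(m, 3) = Z_3^m ⋊ Õ(m, 3)`, realized as the set of permutations of
`F_3^m` of the form `x ↦ A x + b` with `A` invertible and `AᵀA = λI` for some `λ ≠ 0`. -/
def aoTildeSet (m : ℕ) : Set (Equiv.Perm (Fin m → ZMod 3)) :=
  { f | ∃ (A : Matrix (Fin m) (Fin m) (ZMod 3)) (b : Fin m → ZMod 3) (lam : ZMod 3),
      IsUnit A ∧ lam ≠ 0 ∧ Aᵀ * A = lam • 1 ∧ ∀ x, f x = A.mulVec x + b }

/-!
The code is the fixed space of the circulant matrix over `F_2` formed by the Krawtchouk numbers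
`K_w(wt x)`, so its automorphisms are the permutations `π` that preserve the parity of
`K_w(wt (x - y))`.

Lift this parity to a `0`-`1` function over `ℂ`. Its Fourier transform is integral and reduces
modulo `2` to the indicator of the sphere of radius `w`. The functions whose Fourier transform is a
kernel invariant under `π` form an algebra, which therefore contains that indicator, and hence also
the function counting the ways to write a point as a sum of two points of the sphere. For `m ≥ 6`
these counts exceed those at all weights `≥ 3` at weight `1` or `2`, so the algebra contains the
indicator of weight `1`, of weight `2`, or of both. The Fourier transform of this indicator is a
polynomial of degree at most `2` in the weight, and it singles out distance `1`. Thus `π` is a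
Hamming isometry, and `wt x = x ⬝ᵥ x` in `F_3` makes it a similitude. The inclusion is strict since
a reflection can move distance `1` to distance `4`.

For `m ∈ {4, 5}` and `w = 3`, the number `K_3(d)` is odd exactly for `d = 3`, so automorphisms are
the permutations preserving isotropy of differences, and every similitude is one. Conversely, for
`m = 5` counting points of the sphere recovers `wt x` modulo `3`. For `m = 4` isotropic lines are
mapped to lines, and comparing the third points of such lines shows that `π` scales `x ⬝ᵥ x` by a
constant.
-/

open Finset Polynomial

section Fourier

variable {ι k R : Type*} [Fintype ι] [CommRing k] [CommRing R]

theorem addChar_dotProduct (ψ : AddChar k R) (x y : ι → k) :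
    ψ (x ⬝ᵥ y) = ∏ i, ψ (x i * y i) :=
  map_prod ψ.toMonoidHom _ _

variable [Fintype k] [DecidableEq ι]

/-- The discrete Fourier transform on `ι → k` attached to an additive character `ψ` of `k`, with
kernel `ψ (j ⬝ᵥ x)`. It is used both in characteristic two, where codes are defined, and over
`ℂ`. -/
def dft (ψ : AddChar k R) : ((ι → k) → R) →ₗ[R] (ι → k) → R :=
  mulVecLin (of fun x j => ψ (j ⬝ᵥ x))

theorem dft_apply (ψ : AddChar k R) (c : (ι → k) → R) (x : ι → k) :
    dft ψ c x = ∑ j, c j * ψ (j ⬝ᵥ x) := by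
  simp only [dft, mulVecLin_apply, mulVec, dotProduct, of_apply, mul_comm]

theorem dft_circulant_mulVec (ψ : AddChar k R) (c c' : (ι → k) → R) :
    dft ψ (circulant c *ᵥ c') = dft ψ c * dft ψ c' := by
  funext x
  calc dft ψ (circulant c *ᵥ c') x
      = ∑ y, ∑ z, c (z - y) * c' y * ψ (z ⬝ᵥ x) := by
        simp only [dft_apply, mulVec_eq_sum, Finset.sum_apply, sum_mul]
        rw [sum_comm]
        simp [mul_comm]
    _ = ∑ y, ∑ z, c z * c' y * ψ ((z + y) ⬝ᵥ x) :=
        sum_congr rfl fun y _ => Fintype.sum_equiv (Equiv.subRight y) _ _ (by simp)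
    _ = dft ψ c x * dft ψ c' x := by
        simp only [dft_apply, sum_mul_sum, add_dotProduct, AddChar.map_add_eq_mul]
        rw [sum_comm]
        exact sum_congr rfl fun _ _ => sum_congr rfl fun _ _ => by ring

variable [IsDomain R] {ψ : AddChar k R} (hψ : ψ.IsPrimitive)
include hψ

theorem sum_addChar_dotProduct [DecidableEq k] (x : ι → k) :
    ∑ j, ψ (j ⬝ᵥ x) = if x = 0 then (Fintype.card k : R) ^ Fintype.card ι else 0 := by
  have factor : ∑ j, ψ (j ⬝ᵥ x) = ∏ i, ∑ a, ψ (a * x i) := by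
    simp only [prod_univ_sum, Fintype.piFinset_univ, addChar_dotProduct]
  simp only [factor, AddChar.sum_mulShift _ hψ]
  split_ifs with hx
  · simp [hx]
  · obtain ⟨i, hi : x i ≠ 0⟩ := Function.ne_iff.mp hx
    exact prod_eq_zero (mem_univ i) (by rw [if_neg hi, Nat.cast_zero])

theorem dft_dft (c : (ι → k) → R) (x : ι → k) :
    dft ψ (dft ψ c) x = (Fintype.card k : R) ^ Fintype.card ι * c (-x) := by
  classical
  calc dft ψ (dft ψ c) x = ∑ l, c l * ∑ j, ψ (j ⬝ᵥ (l + x)) := by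
        simp only [dft_apply, sum_mul, mul_sum]
        rw [sum_comm]
        simp only [mul_assoc, dotProduct_add, AddChar.map_add_eq_mul, dotProduct_comm]
    _ = (Fintype.card k : R) ^ Fintype.card ι * c (-x) := by
        simp only [sum_addChar_dotProduct hψ, add_eq_zero_iff_eq_neg, mul_ite, mul_zero,
          sum_ite_eq', mem_univ, if_true, mul_comm]

theorem dft_injective (hk : (Fintype.card k : R) ≠ 0) :
    Function.Injective (dft (ι := ι) ψ) := by
  intro c c' h
  funext x
  have inverted := congrArg (fun f => dft ψ f (-x)) h
  simpa [dft_dft hψ, hk] using inverted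

theorem circulant_dft_mulVec_dft (hk : (Fintype.card k : R) ≠ 0) (c c' : (ι → k) → R) :
    circulant (dft ψ c) *ᵥ dft ψ c' =
      (Fintype.card k : R) ^ Fintype.card ι • dft ψ (c * c') := by
  apply dft_injective hψ hk
  funext x
  rw [dft_circulant_mulVec, map_smul, Pi.mul_apply, Pi.smul_apply, dft_dft hψ, dft_dft hψ,
    dft_dft hψ, Pi.mul_apply, smul_eq_mul]
  ring

end Fourier

section Krawtchouk

/-- The Krawtchouk number `K_w(d)`: the value at an argument of weight `d` of the Fourier transform
of the sphere of radius `w` in `m` coordinates over an alphabet of size `q`. -/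
def krawtchouk (q m w d : ℕ) : ℤ :=
  ∑ p ∈ antidiagonal w, ((m - d).choose p.1 * (q - 1) ^ p.1) * (d.choose p.2 * (-1) ^ p.2)

theorem coeff_C_add_C_mul_X_pow {R : Type*} [CommSemiring R] (a b : R) (n i : ℕ) :
    ((C a + C b * X) ^ n).coeff i = a ^ (n - i) * n.choose i * b ^ i := by
  rw [← coeff_X_add_C_pow, ← comp_C_mul_X_coeff]
  simp [add_comm]

theorem krawtchouk_eq_coeff (q m w d : ℕ) :
    krawtchouk q m w d = ((1 + C ((q : ℤ) - 1) * X) ^ (m - d) * (1 - X) ^ d).coeff w := by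
  have neg_X : (1 - X : ℤ[X]) = C 1 + C (-1) * X := by simp [sub_eq_add_neg]
  rw [neg_X, ← C_1, coeff_mul]
  simp only [coeff_C_add_C_mul_X_pow, one_pow, one_mul, krawtchouk]

theorem krawtchouk_three_one {m d : ℕ} (hd : d ≤ m) : krawtchouk 3 m 1 d = 2 * m - 3 * d := by
  obtain ⟨e, rfl⟩ := exists_add_of_le hd
  have expand : krawtchouk 3 (d + e) 1 d = -d + e * 2 := by
    simp [krawtchouk, Nat.antidiagonal_succ]
  rw [expand]
  push_cast
  ring

theorem two_mul_krawtchouk_three_two {m d : ℕ} (hd : d ≤ m) :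
    2 * krawtchouk 3 m 2 d = 9 * d ^ 2 - (12 * m - 3) * d + 4 * m ^ 2 - 4 * m := by
  obtain ⟨e, rfl⟩ := exists_add_of_le hd
  have two_mul_choose_two (n : ℕ) : 2 * (n.choose 2 : ℤ) = n * (n - 1) := by
    have := Nat.cast_choose_two ℚ n
    exact_mod_cast (by linarith : 2 * (n.choose 2 : ℚ) = n * (n - 1))
  have expand :
      krawtchouk 3 (d + e) 2 d = d.choose 2 + (-(e * 2 * d) + e.choose 2 * 4) := by
    simp [krawtchouk, Nat.antidiagonal_succ]
  rw [expand]
  push_cast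
  linear_combination 4 * two_mul_choose_two e + two_mul_choose_two d

variable {ι k R : Type*} [Fintype ι]

theorem prod_ite_eq_zero_eq_pow_mul_pow [Zero k] [DecidableEq k] [CommMonoid R] (a b : R)
    (x : ι → k) :
    ∏ i, (if x i = 0 then a else b) =
      a ^ (Fintype.card ι - hammingNorm x) * b ^ hammingNorm x := by
  have card_zeros : #{i | x i = 0} = Fintype.card ι - hammingNorm x := by
    rw [← card_univ, ← card_filter_add_card_filter_not (s := univ) (p := fun i => x i = 0)]
    exact (Nat.add_sub_cancel ..).symm
  rw [prod_ite, prod_const, prod_const, card_zeros, hammingNorm]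

theorem pow_hammingNorm [Zero k] [DecidableEq k] [CommMonoid R] (b : R) (x : ι → k) :
    b ^ hammingNorm x = ∏ i, (if x i = 0 then 1 else b) := by
  rw [prod_ite_eq_zero_eq_pow_mul_pow, one_pow, one_mul]

theorem hammingNorm_neg [AddGroup k] [DecidableEq k] (x : ι → k) :
    hammingNorm (-x) = hammingNorm x :=
  hammingNorm_comp (fun _ => Neg.neg) (fun _ => neg_injective) fun _ => neg_zero

variable [CommRing k] [Fintype k] [DecidableEq k] [DecidableEq ι] [CommRing R] [IsDomain R]
  {ψ : AddChar k R} (hψ : ψ.IsPrimitive)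
include hψ

theorem sum_addChar_mul_ite (y : k) :
    ∑ a, C (ψ (a * y)) * (if a = 0 then 1 else X) =
      if y = 0 then 1 + C ((Fintype.card k : R) - 1) * X else 1 - X := by
  have split (a : k) : C (ψ (a * y)) * (if a = 0 then 1 else X) =
      C (ψ (a * y)) * X + if a = 0 then 1 - X else 0 := by
    split_ifs with h
    · rw [h, zero_mul, AddChar.map_zero_eq_one, map_one]
      ring
    · rw [add_zero]
  simp only [split, sum_add_distrib, ← sum_mul, ← map_sum, AddChar.sum_mulShift _ hψ,
    sum_ite_eq', mem_univ, if_true]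
  split_ifs
  · rw [map_sub, map_one]
    ring
  · simp

theorem sum_addChar_mul_X_pow_hammingNorm (x : ι → k) :
    ∑ j, C (ψ (j ⬝ᵥ x)) * X ^ hammingNorm j =
      (1 + C ((Fintype.card k : R) - 1) * X) ^ (Fintype.card ι - hammingNorm x) *
        (1 - X) ^ hammingNorm x := by
  rw [← prod_ite_eq_zero_eq_pow_mul_pow]
  simp only [← sum_addChar_mul_ite hψ, prod_univ_sum, Fintype.piFinset_univ, addChar_dotProduct,
    pow_hammingNorm, map_prod, ← prod_mul_distrib]

theorem dft_sphere (w : ℕ) (x : ι → k) :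
    dft ψ (fun j => if hammingNorm j = w then 1 else 0) x =
      krawtchouk (Fintype.card k) (Fintype.card ι) w (hammingNorm x) := by
  have generating := congrArg (coeff · w) (sum_addChar_mul_X_pow_hammingNorm hψ x)
  have cast : ((krawtchouk (Fintype.card k) (Fintype.card ι) w (hammingNorm x) : ℤ) : R) =
      ((1 + C ((Fintype.card k : R) - 1) * X) ^ (Fintype.card ι - hammingNorm x) *
        (1 - X) ^ hammingNorm x).coeff w := by
    rw [krawtchouk_eq_coeff, ← eq_intCast (Int.castRingHom R), ← coeff_map]
    simp
  rw [cast, ← generating, dft_apply]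
  simp [coeff_X_pow, eq_comm]

theorem dft_comp_hammingNorm (g : ℕ → R) (x : ι → k) :
    dft ψ (fun j => g (hammingNorm j)) x =
      ∑ d ∈ range (Fintype.card ι + 1),
        g d * krawtchouk (Fintype.card k) (Fintype.card ι) d (hammingNorm x) := by
  have expand : (fun j : ι → k => g (hammingNorm j)) =
      ∑ d ∈ range (Fintype.card ι + 1), g d • fun j => if hammingNorm j = d then 1 else 0 := by
    funext j
    simp [hammingNorm_le_card_fintype]
  simp only [expand, map_sum, map_smul, Finset.sum_apply, Pi.smul_apply, dft_sphere hψ,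
    smul_eq_mul]

theorem dft_krawtchouk_hammingNorm (w : ℕ) (x : ι → k) :
    dft ψ (fun j => krawtchouk (Fintype.card k) (Fintype.card ι) w (hammingNorm j)) x =
      if hammingNorm x = w then (Fintype.card k : R) ^ Fintype.card ι else 0 := by
  have sphere : (fun j : ι → k => (krawtchouk (Fintype.card k) (Fintype.card ι) w
      (hammingNorm j) : R)) = dft ψ fun j => if hammingNorm j = w then 1 else 0 :=
    funext fun j => (dft_sphere hψ w j).symm
  rw [sphere, dft_dft hψ, hammingNorm_neg, mul_ite, mul_one, mul_zero]

end Krawtchouk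

section SpectralAlgebra

/-- `F` is an invariant kernel of the permutation `π`: the function `(x, y) ↦ F (x - y)` is
preserved by `π`. -/
def IsInvariantKernel {V R : Type*} [Sub V] (π : Equiv.Perm V) (F : V → R) : Prop :=
  ∀ x y, F (π x - π y) = F (x - y)

theorem isInvariantKernel_iff_submatrix_circulant {V R : Type*} [Sub V] {π : Equiv.Perm V}
    {F : V → R} :
    IsInvariantKernel π F ↔ (circulant F).submatrix π π = circulant F :=
  Matrix.ext_iff

theorem isInvariantKernel_circulant_mulVec {V R : Type*} [AddGroup V] [Fintype V] [Semiring R]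
    {π : Equiv.Perm V} {F G : V → R} (hF : IsInvariantKernel π F) (hG : IsInvariantKernel π G) :
    IsInvariantKernel π (circulant F *ᵥ G) := by
  rw [isInvariantKernel_iff_submatrix_circulant] at *
  rw [← circulant_mul, ← submatrix_mul_equiv _ _ _ π, hF, hG]

theorem mem_of_factorsThrough {X F : Type*} [Finite X] [Field F] {S : Subalgebra F (X → F)}
    {c c' : X → F} (hc : c ∈ S) (h : c'.FactorsThrough c) : c' ∈ S := by
  classical
  have := Fintype.ofFinite X
  obtain ⟨e, rfl⟩ := (Function.factorsThrough_iff c').mp h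
  have interpolated : Polynomial.aeval c (Lagrange.interpolate (univ.image c) id e) = e ∘ c := by
    funext x
    rw [aeval_fn_apply, coe_aeval_eq_eval]
    exact Lagrange.eval_interpolate_at_node e Function.injective_id.injOn
      (mem_image_of_mem c (mem_univ x))
  exact interpolated ▸ Algebra.adjoin_singleton_le hc (aeval_mem_adjoin_singleton F c)

variable {ι k F : Type*} [Fintype ι] [DecidableEq ι] [CommRing k] [Fintype k] [DecidableEq k]
  [Field F] {ψ : AddChar k F}

/-- The functions whose Fourier transform is an invariant kernel of `π`. They form an algebra
because pointwise products transform into convolutions. -/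
def spectralAlgebra (hψ : ψ.IsPrimitive) (hk : (Fintype.card k : F) ≠ 0)
    (π : Equiv.Perm (ι → k)) : Subalgebra F ((ι → k) → F) where
  carrier := {c | IsInvariantKernel π (dft ψ c)}
  add_mem' hc hc' x y := by rw [map_add, Pi.add_apply, hc, hc', Pi.add_apply]
  mul_mem' {c c'} hc hc' x y := by
    have := isInvariantKernel_circulant_mulVec hc hc' x y
    rw [circulant_dft_mulVec_dft hψ hk] at this
    exact mul_left_cancel₀ (pow_ne_zero _ hk) this
  algebraMap_mem' r x y := by
    simp only [dft_apply, Pi.algebraMap_apply, ← mul_sum, sum_addChar_dotProduct hψ, sub_eq_zero,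
      π.injective.eq_iff]

variable {hψ : ψ.IsPrimitive} {hk : (Fintype.card k : F) ≠ 0} {π : Equiv.Perm (ι → k)}

theorem mem_spectralAlgebra {c : (ι → k) → F} :
    c ∈ spectralAlgebra hψ hk π ↔ IsInvariantKernel π (dft ψ c) :=
  Iff.rfl

theorem circulant_mulVec_mem_spectralAlgebra {c c' : (ι → k) → F}
    (hc : c ∈ spectralAlgebra hψ hk π) (hc' : c' ∈ spectralAlgebra hψ hk π) :
    circulant c *ᵥ c' ∈ spectralAlgebra hψ hk π := by
  intro x y
  rw [dft_circulant_mulVec, Pi.mul_apply, Pi.mul_apply, hc, hc']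

theorem single_zero_mem_spectralAlgebra : Pi.single 0 1 ∈ spectralAlgebra hψ hk π := by
  intro x y
  simp [dft_apply, Pi.single_apply]

end SpectralAlgebra

section CodeAutomorphisms

theorem mem_codeAut_iff {I : Type} {C : Set (I → ZMod 2)} {π : Equiv.Perm I} :
    π ∈ codeAut C ↔ ∀ c, c ∘ π.symm ∈ C ↔ c ∈ C := by
  have comp_injective : Function.Injective fun c : I → ZMod 2 => c ∘ π.symm :=
    π.symm.surjective.injective_comp_right
  constructor
  · intro (h : _ '' C = C) c
    simpa only [h] using comp_injective.mem_set_image (s := C) (a := c)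
  · intro h
    refine Set.ext fun c => ⟨?_, fun hc => ⟨c ∘ π, (h _).mp ?_, ?_⟩⟩
    · rintro ⟨c, hc, rfl⟩
      exact (h c).mpr hc
    · simpa [Function.comp_assoc] using hc
    · simp [Function.comp_assoc]

theorem mem_codeAut_fixedVectors_iff {I : Type} [Fintype I]
    {M : Matrix I I (ZMod 2)} (symmetric : M.IsSymm) (idempotent : M * M = M)
    {π : Equiv.Perm I} :
    π ∈ codeAut {a | M *ᵥ a = a} ↔ M.submatrix π π = M := by
  classical
  set N := M.submatrix π π with hN
  have fixed_comp (a : I → ZMod 2) : M *ᵥ (a ∘ π.symm) = a ∘ π.symm ↔ N *ᵥ a = a := by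
    rw [hN, submatrix_mulVec_equiv, Equiv.eq_comp_symm]
  rw [mem_codeAut_iff]
  simp only [Set.mem_ofPred_eq, fixed_comp]
  refine ⟨fun same_fixed => ?_, fun h a => by rw [h]⟩
  have idempotent_N : N * N = N := by rw [hN, submatrix_mul_equiv, idempotent]
  have left : N * M = M := by
    refine ext_of_mulVec_single fun i => ?_
    rw [← mulVec_mulVec, same_fixed, mulVec_mulVec, idempotent]
  have right : M * N = N := by
    refine ext_of_mulVec_single fun i => ?_
    rw [← mulVec_mulVec, ← same_fixed, mulVec_mulVec, idempotent_N]
  calc N = M * N := right.symm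
    _ = (N * M)ᵀ := by rw [transpose_mul, symmetric.eq, (symmetric.submatrix π).eq]
    _ = M := by rw [left, symmetric.eq]

/-- The parities of the Krawtchouk numbers `K_w`, arranged by differences of coordinates. For odd
`n` this is the matrix of the projection onto `C(n, m, {w})`. -/
def krawtchoukMatrix (n m w : ℕ) : Matrix (Fin m → ZMod n) (Fin m → ZMod n) (ZMod 2) :=
  circulant fun x => krawtchouk n m w (hammingNorm x)

theorem krawtchoukMatrix_isSymm (n m w : ℕ) : (krawtchoukMatrix n m w).IsSymm :=
  circulant_isSymm_iff.mpr fun x => by rw [hammingNorm_neg]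

theorem natCast_eq_one_of_odd {R : Type*} [AddMonoidWithOne R] [CharP R 2] {n : ℕ} (hn : Odd n) :
    (n : R) = 1 := by
  rw [CharTwo.natCast_eq_ite, if_neg (Nat.not_even_iff_odd.2 hn)]

variable {n m w : ℕ} [NeZero n] {K : Type} [Field K] [CharP K 2] {α : K}

theorem mem_abelianCode_iff_dft_eq_zero (hα : IsPrimitiveRoot α n) {W : Set ℕ}
    {a : (Fin m → ZMod n) → ZMod 2} :
    a ∈ abelianCode n m W K α ↔ ∀ j, hammingNorm j ∉ W →
      dft (AddChar.zmodChar n hα.pow_eq_one) (ZMod.castHom dvd_rfl K ∘ a) j = 0 := by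
  have lift_bit (b : ZMod 2) : (if b = 1 then (1 : K) else 0) = ZMod.castHom dvd_rfl K b := by
    obtain rfl | rfl : b = 0 ∨ b = 1 := by decide +revert
    all_goals simp
  simp only [abelianCode, Set.mem_ofPred_eq, lift_bit, dft_apply, AddChar.zmodChar_apply,
    Function.comp_apply, dotProduct]

theorem dft_krawtchoukMatrix_mulVec (hn : Odd n) {ψ : AddChar (ZMod n) K} (hψ : ψ.IsPrimitive)
    (a : (Fin m → ZMod n) → ZMod 2) :
    dft ψ (ZMod.castHom dvd_rfl K ∘ (krawtchoukMatrix n m w *ᵥ a)) =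
      fun j => if hammingNorm j = w then dft ψ (ZMod.castHom dvd_rfl K ∘ a) j else 0 := by
  have lift_mulVec : ZMod.castHom dvd_rfl K ∘ (krawtchoukMatrix n m w *ᵥ a) =
      circulant (fun x => (krawtchouk n m w (hammingNorm x) : K)) *ᵥ
        (ZMod.castHom dvd_rfl K ∘ a) := by
    funext x
    rw [Function.comp_apply, RingHom.map_mulVec, krawtchoukMatrix, map_circulant]
    simp only [map_intCast]
  have dft_kernel := dft_krawtchouk_hammingNorm (ι := Fin m) hψ w
  simp only [ZMod.card, Fintype.card_fin, natCast_eq_one_of_odd hn, one_pow] at dft_kernel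
  funext j
  rw [lift_mulVec, dft_circulant_mulVec, Pi.mul_apply, dft_kernel, ite_mul, one_mul, zero_mul]

theorem mem_abelianCode_iff (hn : Odd n) (hα : IsPrimitiveRoot α n)
    {a : (Fin m → ZMod n) → ZMod 2} :
    a ∈ abelianCode n m {w} K α ↔ krawtchoukMatrix n m w *ᵥ a = a := by
  have hψ := AddChar.zmodChar_primitive_of_primitive_root n hα
  have card_ne_zero : (Fintype.card (ZMod n) : K) ≠ 0 := by
    rw [ZMod.card, natCast_eq_one_of_odd hn]
    exact one_ne_zero
  have lift_injective : Function.Injective fun c : (Fin m → ZMod n) → ZMod 2 =>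
      ZMod.castHom dvd_rfl K ∘ c := (ZMod.castHom dvd_rfl K).injective.comp_left
  rw [mem_abelianCode_iff_dft_eq_zero hα, ← lift_injective.eq_iff,
    ← (dft_injective hψ card_ne_zero).eq_iff, dft_krawtchoukMatrix_mulVec hn hψ, funext_iff]
  simp only [Set.mem_singleton_iff, ite_eq_left_iff]
  exact forall₂_congr fun _ _ => eq_comm

theorem krawtchoukMatrix_mul_self (hn : Odd n) (hα : IsPrimitiveRoot α n) :
    krawtchoukMatrix n m w * krawtchoukMatrix n m w = krawtchoukMatrix n m w := by
  have hψ := AddChar.zmodChar_primitive_of_primitive_root n hα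
  refine ext_of_mulVec_single fun i => ?_
  rw [← mulVec_mulVec, ← mem_abelianCode_iff hn hα, mem_abelianCode_iff_dft_eq_zero hα,
    dft_krawtchoukMatrix_mulVec hn hψ]
  exact fun j hj => if_neg hj

theorem mem_codeAut_abelianCode_iff (hn : Odd n) (hα : IsPrimitiveRoot α n)
    {π : Equiv.Perm (Fin m → ZMod n)} :
    π ∈ codeAut (abelianCode n m {w} K α) ↔
      IsInvariantKernel π fun x => (krawtchouk n m w (hammingNorm x) : ZMod 2) := by
  have fixed : abelianCode n m {w} K α = {a | krawtchoukMatrix n m w *ᵥ a = a} :=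
    Set.ext fun _ => mem_abelianCode_iff hn hα
  rw [fixed, mem_codeAut_fixedVectors_iff (krawtchoukMatrix_isSymm n m w)
    (krawtchoukMatrix_mul_self hn hα), ← Matrix.ext_iff]
  rfl

end CodeAutomorphisms

section SphereSpectrum

variable {ι F : Type*} [Fintype ι] {n w : ℕ} [NeZero n]

theorem sum_krawtchouk_mul_krawtchouk (w : ℕ) (j : ι → ZMod n) :
    ∑ d ∈ range (Fintype.card ι + 1), krawtchouk n (Fintype.card ι) w d *
      krawtchouk n (Fintype.card ι) d (hammingNorm j) =
        if hammingNorm j = w then (n : ℤ) ^ Fintype.card ι else 0 := by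
  classical
  have hψ := ZMod.isPrimitive_stdAddChar n
  have over_complex := dft_krawtchouk_hammingNorm hψ w j
  rw [dft_comp_hammingNorm hψ (fun d => (krawtchouk _ _ w d : ℂ)), ZMod.card] at over_complex
  exact_mod_cast over_complex

theorem sphere_mem_spectralAlgebra [DecidableEq ι] [Field F] [CharZero F]
    {ψ : AddChar (ZMod n) F} {hψ : ψ.IsPrimitive} {hk : (Fintype.card (ZMod n) : F) ≠ 0}
    {π : Equiv.Perm (ι → ZMod n)} (hn : Odd n) (hπ : IsInvariantKernel π fun x =>
      (krawtchouk n (Fintype.card ι) w (hammingNorm x) : ZMod 2)) :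
    (fun j => if hammingNorm j = w then 1 else 0) ∈ spectralAlgebra hψ hk π := by
  let parity (d : ℕ) : ℤ := if (krawtchouk n (Fintype.card ι) w d : ZMod 2) = 0 then 0 else 1
  let spectrum (j : ι → ZMod n) : ℤ := ∑ d ∈ range (Fintype.card ι + 1),
    parity d * krawtchouk n (Fintype.card ι) d (hammingNorm j)
  have spectrum_mem : (fun j => (spectrum j : F)) ∈ spectralAlgebra hψ hk π := by
    have spectrum_eq_dft : (fun j => (spectrum j : F)) =
        dft ψ fun x => (parity (hammingNorm x) : F) := by
      funext j
      rw [dft_comp_hammingNorm hψ (fun d => (parity d : F)), ZMod.card]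
      exact_mod_cast rfl
    intro x y
    simp only [spectrum_eq_dft, dft_dft hψ, hammingNorm_neg, parity, hπ x y]
  have spectrum_parity (j : ι → ZMod n) :
      (spectrum j : ZMod 2) = if hammingNorm j = w then 1 else 0 := by
    have parity_cast (d : ℕ) :
        (parity d : ZMod 2) = krawtchouk n (Fintype.card ι) w d := by
      simp only [parity]
      generalize (krawtchouk n (Fintype.card ι) w d : ZMod 2) = b
      decide +revert
    have orthogonality := congrArg (Int.cast : ℤ → ZMod 2) (sum_krawtchouk_mul_krawtchouk w j)
    have odd_pow : (n : ZMod 2) = 1 := natCast_eq_one_of_odd hn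
    push_cast [odd_pow, one_pow] at orthogonality
    simpa only [spectrum, Int.cast_sum, Int.cast_mul, parity_cast] using orthogonality
  refine mem_of_factorsThrough spectrum_mem fun i j h => ?_
  have same_parity := congrArg (Int.cast : ℤ → ZMod 2) (Int.cast_injective h)
  rw [spectrum_parity, spectrum_parity] at same_parity
  have same_sphere : hammingNorm i = w ↔ hammingNorm j = w := by
    split_ifs at same_parity <;> simp_all
  simp only [same_sphere]

end SphereSpectrum

section IntersectionNumbers

/-- The number of vectors over `ZMod 3` that have weight `w` and lie at Hamming distance `w` from a
given vector with `k` nonzero and `n` zero coordinates. -/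
def intersectionNumber (n k w : ℕ) : ℕ :=
  ∑ p ∈ antidiagonal w, n.choose p.1 * 2 ^ p.1 * (k.choose p.2 * p.2.choose (k - p.2))

variable {ι R : Type*} [Fintype ι] [DecidableEq ι] [CommSemiring R]

theorem coeff_X_pow_mul_one_add_X_pow {k w : ℕ} {p : ℕ × ℕ}
    (hp : p ∈ antidiagonal w) :
    ((X : R[X]) ^ (p.1 + (k - p.2)) * (1 + X) ^ p.2).coeff w = (p.2.choose (k - p.2) : R) := by
  rw [HasAntidiagonal.mem_antidiagonal] at hp
  rw [coeff_X_pow_mul']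
  split_ifs with h
  · rw [coeff_one_add_X_pow, ← Nat.choose_symm (by omega : k - p.2 ≤ p.2)]
    congr 2
    omega
  · rw [Nat.choose_eq_zero_of_lt (by omega), Nat.cast_zero]

theorem coeff_coeff_eq_intersectionNumber (n k w : ℕ) :
    (((1 + C (2 * X) * X) ^ n * (C X + C (1 + X) * X) ^ k : R[X][X]).coeff w).coeff w =
      intersectionNumber n k w := by
  rw [← C_1, coeff_mul, finsetSum_coeff, intersectionNumber, Nat.cast_sum]
  refine sum_congr rfl fun p hp => ?_
  simp only [coeff_C_add_C_mul_X_pow, one_pow, one_mul]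
  push_cast
  rw [← coeff_X_pow_mul_one_add_X_pow hp, ← coeff_C_mul, ← coeff_C_mul]
  congr 1
  simp only [map_mul, map_pow, map_natCast, map_ofNat]
  ring

theorem sum_X_pow_hammingNorm_sub_mul (j : ι → ZMod 3) :
    ∑ l, C ((X : R[X]) ^ hammingNorm (j - l)) * X ^ hammingNorm l =
      (1 + C (2 * X) * X) ^ (Fintype.card ι - hammingNorm j) *
        (C X + C (1 + X) * X) ^ hammingNorm j := by
  have one_coordinate (b : ZMod 3) :
      ∑ a, C (if b - a = 0 then (1 : R[X]) else X) * (if a = 0 then 1 else X) =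
        if b = 0 then 1 + C (2 * X) * X else C X + C (1 + X) * X := by
    have two_ne_zero : (2 : ZMod 3) ≠ 0 := by decide
    have sum_eq (f : ZMod 3 → R[X][X]) : ∑ a, f a = f 0 + f 1 + f 2 := Fin.sum_univ_three f
    obtain rfl | rfl | rfl : b = 0 ∨ b = 1 ∨ b = 2 := by decide +revert
    all_goals
      rw [sum_eq]
      reduce_mod_char
      simp only [two_ne_zero, one_ne_zero, if_true, if_false, map_mul, map_add, map_one, map_ofNat]
      ring
  rw [← prod_ite_eq_zero_eq_pow_mul_pow _ _ j]
  simp only [← one_coordinate, prod_univ_sum, Fintype.piFinset_univ, pow_hammingNorm, map_prod,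
    ← prod_mul_distrib, Pi.sub_apply]

theorem circulant_sphere_mulVec_sphere (w : ℕ) :
    (circulant fun j : ι → ZMod 3 => if hammingNorm j = w then (1 : R) else 0) *ᵥ
      (fun j => if hammingNorm j = w then 1 else 0) =
        fun j => (intersectionNumber (Fintype.card ι - hammingNorm j) (hammingNorm j) w : R) := by
  funext j
  rw [← coeff_coeff_eq_intersectionNumber, ← sum_X_pow_hammingNorm_sub_mul, finsetSum_coeff,
    finsetSum_coeff]
  simp only [mulVec, dotProduct, circulant_apply, coeff_C_mul, coeff_X_pow, mul_ite, mul_one,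
    mul_zero, eq_comm (b := w)]
  refine sum_congr rfl fun l _ => ?_
  split_ifs <;> simp_all [coeff_X_pow]

end IntersectionNumbers

section IntersectionNumberBounds

theorem intersectionNumber_zero_left (k w : ℕ) :
    intersectionNumber 0 k w = k.choose w * w.choose (k - w) := by
  cases w <;> simp [intersectionNumber, Nat.sum_antidiagonal_succ]

theorem intersectionNumber_succ_left (n k w : ℕ) :
    intersectionNumber (n + 1) k (w + 1) =
      intersectionNumber n k (w + 1) + 2 * intersectionNumber n k w := by
  simp only [intersectionNumber, Nat.sum_antidiagonal_succ, Nat.choose_zero_right,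
    Nat.choose_succ_succ, mul_sum, add_assoc, ← sum_add_distrib]
  congr 1
  exact sum_congr rfl fun p _ => by ring

theorem intersectionNumber_zero_right {k : ℕ} (n : ℕ) (hk : k ≠ 0) :
    intersectionNumber n k 0 = 0 := by
  simp [intersectionNumber, Nat.choose_eq_zero_of_lt (Nat.pos_of_ne_zero hk)]

theorem intersectionNumber_eq_zero_of_lt {n k w : ℕ} (h : n + k < w) :
    intersectionNumber n k w = 0 := by
  refine sum_eq_zero fun p hp => ?_
  rw [HasAntidiagonal.mem_antidiagonal] at hp
  rcases lt_or_ge n p.1 with hn | hn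
  · simp [Nat.choose_eq_zero_of_lt hn]
  · simp [Nat.choose_eq_zero_of_lt (by omega : k < p.2)]

theorem intersectionNumber_one (n w : ℕ) :
    intersectionNumber n 1 (w + 1) = n.choose w * 2 ^ w := by
  induction n generalizing w with
  | zero => cases w <;> simp [intersectionNumber_zero_left, Nat.choose_eq_zero_of_lt]
  | succ n ih =>
    cases w with
    | zero => simp [intersectionNumber_succ_left, ih, intersectionNumber_zero_right]
    | succ w => rw [intersectionNumber_succ_left, ih, ih, Nat.choose_succ_succ]; ring

theorem intersectionNumber_two_one (n : ℕ) : intersectionNumber n 2 1 = 2 := by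
  induction n with
  | zero => rfl
  | succ n ih => rw [intersectionNumber_succ_left, ih, intersectionNumber_zero_right n two_ne_zero]

theorem intersectionNumber_two (n w : ℕ) :
    intersectionNumber n 2 (w + 2) =
      n.choose w * 2 ^ w + 2 * (n.choose (w + 1) * 2 ^ (w + 1)) := by
  induction n generalizing w with
  | zero => cases w <;> simp [intersectionNumber_zero_left, Nat.choose_eq_zero_of_lt]
  | succ n ih =>
    cases w with
    | zero =>
      rw [intersectionNumber_succ_left, ih, intersectionNumber_two_one]
      simp only [Nat.choose_zero_right, zero_add, Nat.choose_one_right]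
      ring
    | succ w =>
      rw [intersectionNumber_succ_left, ih, ih, Nat.choose_succ_succ n (w + 1),
        Nat.choose_succ_succ n w]
      ring

theorem mul_choose_le_mul_two_pow (j : ℕ) {n : ℕ} (hn : 7 ≤ n) : 128 * n.choose j ≤ 35 * 2 ^ n := by
  induction n, hn using Nat.le_induction generalizing j with
  | base =>
    rcases le_or_gt j 7 with hj | hj
    · interval_cases j <;> decide
    · simp [Nat.choose_eq_zero_of_lt hj]
  | succ n _ ih =>
    cases j with
    | zero =>
      have := ih 0
      rw [Nat.choose_zero_right] at this ⊢
      omega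
    | succ j =>
      have := ih j
      have := ih (j + 1)
      rw [Nat.choose_succ_succ', pow_succ]
      omega

theorem mul_choose_lt_mul_two_pow {a c : ℕ} (hac : 6 ≤ c + a) :
    2 * ((c + a + 2) * (c + a + 1)) * (c + 2).choose a <
      3 * ((c + 2) * (c + 2 * a + 1)) * 2 ^ c := by
  rcases lt_or_ge (c + 2) a with ha | ha
  · rw [Nat.choose_eq_zero_of_lt ha, mul_zero]
    positivity
  rcases lt_or_ge c 5 with hc | hc
  · interval_cases c <;> interval_cases a <;> first | omega | decide
  have choose_le : 32 * (c + 2).choose a ≤ 35 * 2 ^ c := by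
    have := mul_choose_le_mul_two_pow a (by omega : 7 ≤ c + 2)
    rw [pow_add] at this
    omega
  have quadratic_lt :
      35 * (2 * ((c + a + 2) * (c + a + 1))) < 32 * (3 * ((c + 2) * (c + 2 * a + 1))) := by
    nlinarith
  refine lt_of_mul_lt_mul_left (a := 32) ?_ (Nat.zero_le _)
  calc 32 * (2 * ((c + a + 2) * (c + a + 1)) * (c + 2).choose a)
      = 2 * ((c + a + 2) * (c + a + 1)) * (32 * (c + 2).choose a) := by ring
    _ ≤ 2 * ((c + a + 2) * (c + a + 1)) * (35 * 2 ^ c) := Nat.mul_le_mul_left _ choose_le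
    _ = 35 * (2 * ((c + a + 2) * (c + a + 1))) * 2 ^ c := by ring
    _ < 32 * (3 * ((c + 2) * (c + 2 * a + 1))) * 2 ^ c :=
      Nat.mul_lt_mul_of_pos_right quadratic_lt (by positivity)
    _ = 32 * (3 * ((c + 2) * (c + 2 * a + 1)) * 2 ^ c) := by ring

-- With `m = c + a + 2` and `w = c + 2`, the factor `m * (m - 1)` lets every binomial coefficient on
-- the left be absorbed into `m.choose w`.
theorem mul_intersectionNumber_one_add_two (a c : ℕ) :
    (c + a + 2) * (c + a + 1) *
        (intersectionNumber (c + a + 1) 1 (c + 2) + intersectionNumber (c + a) 2 (c + 2)) =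
      (c + a + 2).choose (c + 2) * (3 * ((c + 2) * (c + 2 * a + 1)) * 2 ^ c) := by
  have absorb₁ : (c + a + 2) * (c + a + 1).choose (c + 1) =
      (c + a + 2).choose (c + 2) * (c + 2) := Nat.add_one_mul_choose_eq ..
  have absorb₂ : (c + a + 1) * (c + a).choose c = (c + a + 1).choose (c + 1) * (c + 1) :=
    Nat.add_one_mul_choose_eq ..
  have absorb₃ : (c + a + 1) * (c + a).choose (c + 1) = (c + a + 1).choose (c + 1) * a := by
    have := Nat.choose_succ_succ (c + a) c
    nlinarith
  rw [intersectionNumber_one, intersectionNumber_two]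
  calc _ = (c + a + 2) * 2 ^ c * (2 * ((c + a + 1) * (c + a + 1).choose (c + 1)) +
          ((c + a + 1) * (c + a).choose c + 4 * ((c + a + 1) * (c + a).choose (c + 1)))) := by ring
    _ = (c + a + 2) * (c + a + 1).choose (c + 1) * (3 * (c + 2 * a + 1) * 2 ^ c) := by
      rw [absorb₂, absorb₃]; ring
    _ = _ := by rw [absorb₁]; ring

theorem two_mul_intersectionNumber_zero_lt {m w : ℕ} (hm : 8 ≤ m) (hw : 1 ≤ w) (hwm : w ≤ m) :
    2 * intersectionNumber 0 m w <
      intersectionNumber (m - 1) 1 w + intersectionNumber (m - 2) 2 w := by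
  obtain rfl | ⟨c, rfl⟩ : w = 1 ∨ ∃ c, w = c + 2 := by
    rcases w with _ | _ | c <;> simp_all
  · rw [intersectionNumber_zero_left, intersectionNumber_one,
      Nat.choose_eq_zero_of_lt (by omega : 1 < m - 1)]
    simp
  obtain ⟨a, rfl⟩ := Nat.exists_eq_add_of_le hwm
  rw [show c + 2 + a - 1 = c + a + 1 by omega, show c + 2 + a - 2 = c + a by omega,
    show c + 2 + a = c + a + 2 by omega, intersectionNumber_zero_left]
  refine lt_of_mul_lt_mul_left (a := (c + a + 2) * (c + a + 1)) ?_ (Nat.zero_le _)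
  rw [mul_intersectionNumber_one_add_two, show c + a + 2 - (c + 2) = a by omega]
  calc (c + a + 2) * (c + a + 1) * (2 * ((c + a + 2).choose (c + 2) * (c + 2).choose a))
      = (c + a + 2).choose (c + 2) * (2 * ((c + a + 2) * (c + a + 1)) * (c + 2).choose a) := by ring
    _ < _ := Nat.mul_lt_mul_of_pos_left (mul_choose_lt_mul_two_pow (by omega))
      (Nat.choose_pos (by omega))

-- The mean of the values at weights `1` and `2`, unlike their maximum, is additive, so this bound
-- is inherited through the recursion `intersectionNumber_succ_left`.
theorem two_mul_intersectionNumber_lt {m k w : ℕ} (hm : 7 ≤ m) (hk : 3 ≤ k) (hkm : k ≤ m)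
    (hw : 1 ≤ w) (hwm : w ≤ m) :
    2 * intersectionNumber (m - k) k w <
      intersectionNumber (m - 1) 1 w + intersectionNumber (m - 2) 2 w := by
  induction m, hm using Nat.le_induction generalizing w with
  | base =>
    have base_case : ∀ k ∈ Icc 3 7, ∀ w ∈ Icc 1 7, 2 * intersectionNumber (7 - k) k w <
        intersectionNumber 6 1 w + intersectionNumber 5 2 w := by decide +kernel
    exact base_case k (mem_Icc.2 ⟨hk, hkm⟩) w (mem_Icc.2 ⟨hw, hwm⟩)
  | succ m hm ih =>
    obtain rfl | hkm' := hkm.eq_or_lt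
    · rw [Nat.sub_self]
      exact two_mul_intersectionNumber_zero_lt (by omega) hw hwm
    obtain ⟨w, rfl⟩ := Nat.exists_eq_add_of_le' hw
    rw [show m + 1 - k = m - k + 1 by omega, show m + 1 - 1 = m - 1 + 1 by omega,
      show m + 1 - 2 = m - 2 + 1 by omega]
    simp only [intersectionNumber_succ_left]
    have pascal_left : 2 * intersectionNumber (m - k) k w ≤
        intersectionNumber (m - 1) 1 w + intersectionNumber (m - 2) 2 w := by
      rcases w.eq_zero_or_pos with rfl | hw0
      · simp [intersectionNumber_zero_right _ (by omega : k ≠ 0)]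
      · exact (ih (by omega) hw0 (by omega)).le
    obtain hwm' | rfl : w + 1 ≤ m ∨ w = m := by omega
    · have := ih (by omega) hw hwm'
      omega
    · have := ih (by omega) (by omega : 1 ≤ w) le_rfl
      rw [intersectionNumber_eq_zero_of_lt (by omega : w - k + k < w + 1)]
      omega

theorem intersectionNumber_lt_max {m k w : ℕ} (hm : 6 ≤ m) (hk : 3 ≤ k) (hkm : k ≤ m)
    (hw : 1 ≤ w) (hwm : w ≤ m) (h : 3 ∣ w ∨ 7 ≤ m) :
    intersectionNumber (m - k) k w <
      max (intersectionNumber (m - 1) 1 w) (intersectionNumber (m - 2) 2 w) := by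
  obtain rfl | hm' := hm.eq_or_lt
  · have dimension_six : ∀ k ∈ Icc 3 6, ∀ w ∈ Icc 1 6, 3 ∣ w ∨ 7 ≤ 6 →
        intersectionNumber (6 - k) k w <
          max (intersectionNumber 5 1 w) (intersectionNumber 4 2 w) := by decide +kernel
    exact dimension_six k (mem_Icc.2 ⟨hk, hkm⟩) w (mem_Icc.2 ⟨hw, hwm⟩) h
  · have := two_mul_intersectionNumber_lt hm' hk hkm hw hwm
    omega

end IntersectionNumberBounds

section DistanceOne

theorem eq_one_of_sum_krawtchouk_eq {m d : ℕ} {T : Finset ℕ} (hm : 6 ≤ m) (hd : d ≤ m)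
    (hT : T ⊆ {1, 2}) (hT' : T.Nonempty)
    (h : ∑ w ∈ T, krawtchouk 3 m w d = ∑ w ∈ T, krawtchouk 3 m w 1) : d = 1 := by
  have one_at_d := krawtchouk_three_one hd
  have one_at_one := krawtchouk_three_one (by omega : 1 ≤ m)
  have two_at_d := two_mul_krawtchouk_three_two hd
  have two_at_one := two_mul_krawtchouk_three_two (by omega : 1 ≤ m)
  have cases_of_subset : ∀ T ∈ ({1, 2} : Finset ℕ).powerset, T.Nonempty →
      T = {1} ∨ T = {2} ∨ T = {1, 2} := by decide
  push_cast at one_at_one two_at_one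
  obtain rfl | rfl | rfl := cases_of_subset T (mem_powerset.2 hT) hT'
  · rw [sum_singleton, sum_singleton] at h
    omega
  · rw [sum_singleton, sum_singleton] at h
    have factored : ((d : ℤ) - 1) * (3 * d + 4 - 4 * m) = 0 := by linarith
    rcases mul_eq_zero.1 factored with h | h <;> omega
  · rw [sum_pair (by decide), sum_pair (by decide)] at h
    have factored : ((d : ℤ) - 1) * (3 * d + 2 - 4 * m) = 0 := by linarith
    rcases mul_eq_zero.1 factored with h | h <;> omega

variable {ι F : Type*} [Fintype ι] [Field F] [CharZero F] {w : ℕ}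
  {ψ : AddChar (ZMod 3) F} {hψ : ψ.IsPrimitive} {hk : (Fintype.card (ZMod 3) : F) ≠ 0}
  {π : Equiv.Perm (ι → ZMod 3)}

theorem intersectionNumber_mem_spectralAlgebra [DecidableEq ι] (hπ : IsInvariantKernel π fun x =>
      (krawtchouk 3 (Fintype.card ι) w (hammingNorm x) : ZMod 2)) :
    (fun j => (intersectionNumber (Fintype.card ι - hammingNorm j) (hammingNorm j) w : F)) ∈
      spectralAlgebra hψ hk π := by
  have sphere_mem := sphere_mem_spectralAlgebra (hψ := hψ) (hk := hk) (by decide) hπ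
  rw [← circulant_sphere_mulVec_sphere]
  exact circulant_mulVec_mem_spectralAlgebra sphere_mem sphere_mem

theorem exists_subset_indicator_mem_spectralAlgebra [DecidableEq ι] (hm : 6 ≤ Fintype.card ι)
    (hw : 1 ≤ w) (hwm : w ≤ Fintype.card ι) (h : 3 ∣ w ∨ 7 ≤ Fintype.card ι)
    (hπ : IsInvariantKernel π fun x =>
      (krawtchouk 3 (Fintype.card ι) w (hammingNorm x) : ZMod 2)) :
    ∃ T : Finset ℕ, T ⊆ {1, 2} ∧ T.Nonempty ∧
      (fun j => if hammingNorm j ∈ T then 1 else 0) ∈ spectralAlgebra hψ hk π := by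
  let p (d : ℕ) : ℕ := intersectionNumber (Fintype.card ι - d) d w
  have counts_mem : (fun j => (p (hammingNorm j) : F)) ∈ spectralAlgebra hψ hk π :=
    intersectionNumber_mem_spectralAlgebra hπ
  refine ⟨({1, 2} : Finset ℕ).filter (p · = max (p 1) (p 2)), filter_subset _ _, ?_, ?_⟩
  · rcases max_choice (p 1) (p 2) with h | h
    · exact ⟨1, by simp [h]⟩
    · exact ⟨2, by simp [h]⟩
  have maximal_mem : (fun j => if p (hammingNorm j) = max (p 1) (p 2) then (1 : F) else 0) ∈
      spectralAlgebra hψ hk π :=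
    mem_of_factorsThrough counts_mem fun i j hij => by simp only [Nat.cast_injective hij]
  convert mul_mem maximal_mem (sub_mem (one_mem _) single_zero_mem_spectralAlgebra) using 1
  funext j
  have norm_le := hammingNorm_le_card_fintype (x := j)
  have not_maximal (hj : 3 ≤ hammingNorm j) : p (hammingNorm j) ≠ max (p 1) (p 2) :=
    (intersectionNumber_lt_max hm hj norm_le hw hwm h).ne
  rcases eq_or_ne j 0 with rfl | hj
  · simp
  · have := hammingNorm_pos_iff.2 hj
    obtain h1 | h2 | h3 : hammingNorm j = 1 ∨ hammingNorm j = 2 ∨ 3 ≤ hammingNorm j := by omega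
    · simp [h1, hj]
    · simp [h2, hj]
    · simp [not_maximal h3]

theorem hammingNorm_sub_eq_one_iff (hm : 6 ≤ Fintype.card ι) (hw : 1 ≤ w)
    (hwm : w ≤ Fintype.card ι) (h : 3 ∣ w ∨ 7 ≤ Fintype.card ι)
    (hπ : IsInvariantKernel π fun x =>
      (krawtchouk 3 (Fintype.card ι) w (hammingNorm x) : ZMod 2)) (x y : ι → ZMod 3) :
    hammingNorm (π x - π y) = 1 ↔ hammingNorm (x - y) = 1 := by
  classical
  have hψ := ZMod.isPrimitive_stdAddChar 3
  obtain ⟨T, hT, hT', indicator_mem⟩ := exists_subset_indicator_mem_spectralAlgebra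
    (hψ := hψ) (hk := by simp) hm hw hwm h hπ
  have indicator_eq_sum : (fun j : ι → ZMod 3 => if hammingNorm j ∈ T then (1 : ℂ) else 0) =
      ∑ d ∈ T, fun j => if hammingNorm j = d then 1 else 0 := by
    funext j
    simp
  have kernel_invariant : ∑ d ∈ T, krawtchouk 3 (Fintype.card ι) d (hammingNorm (π x - π y)) =
      ∑ d ∈ T, krawtchouk 3 (Fintype.card ι) d (hammingNorm (x - y)) := by
    have := mem_spectralAlgebra.1 indicator_mem x y
    simp only [indicator_eq_sum, map_sum, Finset.sum_apply, dft_sphere hψ, ZMod.card] at this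
    exact_mod_cast this
  have separates {z : ι → ZMod 3} := eq_one_of_sum_krawtchouk_eq (d := hammingNorm z) hm
    hammingNorm_le_card_fintype hT hT'
  constructor <;> intro hone <;> rw [hone] at kernel_invariant
  · exact separates kernel_invariant.symm
  · exact separates kernel_invariant

end DistanceOne

section HammingIsometries

variable {ι : Type*} {β γ : ι → Type*} [Fintype ι]
  [∀ i, DecidableEq (β i)] [∀ i, DecidableEq (γ i)]

theorem hammingDist_map_le {f : (∀ i, β i) → ∀ i, γ i}
    (hf : ∀ x y, hammingDist x y = 1 → hammingDist (f x) (f y) = 1) (x y : ∀ i, β i) :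
    hammingDist (f x) (f y) ≤ hammingDist x y := by
  classical
  induction hd : hammingDist x y generalizing x with
  | zero => rw [eq_of_hammingDist_eq_zero hd, hammingDist_self]
  | succ d ih =>
    obtain ⟨i, hi⟩ := Function.ne_iff.1 (hammingDist_ne_zero.1 (by omega : hammingDist x y ≠ 0))
    let x' := Function.update x i (y i)
    have differ_at_i : univ.filter (fun j => x j ≠ x' j) = {i} := by
      ext j
      rcases eq_or_ne j i with rfl | hj <;> simp [x', *]
    have erase_i :
        univ.filter (fun j => x' j ≠ y j) = (univ.filter fun j => x j ≠ y j).erase i := by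
      ext j
      rcases eq_or_ne j i with rfl | hj <;> simp [x', *]
    have dist_x_x' : hammingDist x x' = 1 := by
      rw [hammingDist, differ_at_i, card_singleton]
    have dist_x'_y : hammingDist x' y = d := by
      rw [hammingDist, erase_i, card_erase_of_mem (by simpa using hi), ← hammingDist, hd,
        Nat.add_sub_cancel]
    calc hammingDist (f x) (f y) ≤ hammingDist (f x) (f x') + hammingDist (f x') (f y) :=
          hammingDist_triangle ..
      _ = hammingDist (f x') (f y) + 1 := by rw [hf x x' dist_x_x', add_comm]
      _ ≤ d + 1 := Nat.add_le_add_right (ih x' dist_x'_y) 1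

theorem hammingDist_map_eq (e : (∀ i, β i) ≃ ∀ i, γ i)
    (he : ∀ x y, hammingDist (e x) (e y) = 1 ↔ hammingDist x y = 1) (x y : ∀ i, β i) :
    hammingDist (e x) (e y) = hammingDist x y := by
  refine (hammingDist_map_le (fun x y => (he x y).2) x y).antisymm ?_
  have := hammingDist_map_le (f := e.symm) (fun x y h => (he _ _).1 (by simpa using h)) (e x) (e y)
  rwa [e.symm_apply_apply, e.symm_apply_apply] at this

end HammingIsometries

section Similitudes

/-- The quadratic form `x ↦ ∑ i, x i ^ 2`, whose similitudes form `Õ(m, 3)` for `R = ZMod 3`. -/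
def sumSq {ι R : Type*} [Fintype ι] [CommSemiring R] (x : ι → R) : R :=
  x ⬝ᵥ x

variable {ι : Type*} [Fintype ι]

theorem sumSq_eq_hammingNorm (x : ι → ZMod 3) : sumSq x = hammingNorm x := by
  have sq_eq (a : ZMod 3) : a * a = if a ≠ 0 then 1 else 0 := by decide +revert
  simp only [sumSq, dotProduct, sq_eq, sum_boole, hammingNorm]

theorem sumSq_add {R : Type*} [CommSemiring R] (x y : ι → R) :
    sumSq (x + y) = sumSq x + 2 * (x ⬝ᵥ y) + sumSq y := by
  simp only [sumSq, add_dotProduct, dotProduct_add, dotProduct_comm y x]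
  ring

theorem sumSq_sub {R : Type*} [CommRing R] (x y : ι → R) :
    sumSq (x - y) = sumSq x - 2 * (x ⬝ᵥ y) + sumSq y := by
  simp only [sumSq, sub_dotProduct, dotProduct_sub, dotProduct_comm y x]
  ring

theorem sumSq_smul {R : Type*} [CommSemiring R] (a : R) (x : ι → R) :
    sumSq (a • x) = a ^ 2 * sumSq x := by
  simp only [sumSq, smul_dotProduct, dotProduct_smul, smul_eq_mul]
  ring

theorem isLinearMap_of_dotProduct_map {F : Type*} [Field F] {g : (ι → F) → ι → F} {c : F}
    (hg : g.Surjective) (h : ∀ x y, g x ⬝ᵥ g y = c * (x ⬝ᵥ y)) : IsLinearMap F g where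
  map_add x y := by
    rw [← sub_eq_zero, ← dotProduct_eq_zero_iff]
    intro z
    obtain ⟨z, rfl⟩ := hg z
    simp only [sub_dotProduct, add_dotProduct, h]
    ring
  map_smul a x := by
    rw [← sub_eq_zero, ← dotProduct_eq_zero_iff]
    intro z
    obtain ⟨z, rfl⟩ := hg z
    simp only [sub_dotProduct, smul_dotProduct, h, smul_eq_mul]
    ring

theorem exists_matrix_of_sumSq_map_sub [DecidableEq ι] {F : Type*} [Field F] (hF : (2 : F) ≠ 0)
    {f : (ι → F) → ι → F} {c : F} (hf : f.Surjective)
    (h : ∀ x y, sumSq (f x - f y) = c * sumSq (x - y)) :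
    ∃ A : Matrix ι ι F, Aᵀ * A = c • 1 ∧ ∀ x, f x = A *ᵥ x + f 0 := by
  let g x := f x - f 0
  have polarized (x y : ι → F) : g x ⬝ᵥ g y = c * (x ⬝ᵥ y) := by
    have sumSq_g (x) : sumSq (g x) = c * sumSq x := by rw [h, sub_zero]
    have sumSq_g_sub : sumSq (g x - g y) = c * sumSq (x - y) := by
      rw [← h, sub_sub_sub_cancel_right]
    rw [sumSq_sub (g x), sumSq_sub x, sumSq_g, sumSq_g] at sumSq_g_sub
    exact mul_left_cancel₀ hF (by linear_combination -sumSq_g_sub)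
  have g_surjective : g.Surjective := (Equiv.subRight (f 0)).surjective.comp hf
  have g_linear := isLinearMap_of_dotProduct_map g_surjective polarized
  let A := LinearMap.toMatrix' g_linear.mk'
  have mulVec_eq (x) : A *ᵥ x = g x := LinearMap.toMatrix'_mulVec _ x
  refine ⟨A, ?_, fun x => by rw [mulVec_eq, sub_add_cancel]⟩
  ext i j
  calc (Aᵀ * A) i j = (A *ᵥ Pi.single i 1) ⬝ᵥ (A *ᵥ Pi.single j 1) := by
        simp [mul_apply, dotProduct]
    _ = (c • (1 : Matrix ι ι F)) i j := by
        rw [mulVec_eq, mulVec_eq, polarized]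
        simp [one_apply, Pi.single_apply, eq_comm]

variable {m : ℕ} {f : Equiv.Perm (Fin m → ZMod 3)}

theorem mem_aoTildeSet_iff :
    f ∈ aoTildeSet m ↔
      ∃ c : ZMod 3, c ≠ 0 ∧ ∀ x y, sumSq (f x - f y) = c * sumSq (x - y) := by
  constructor
  · rintro ⟨A, b, c, -, hc, hA, hf⟩
    refine ⟨c, hc, fun x y => ?_⟩
    rw [hf, hf, add_sub_add_right_eq_sub, ← mulVec_sub, sumSq, dotProduct_mulVec,
      vecMul_mulVec, hA, vecMul_smul, vecMul_one, smul_dotProduct, smul_eq_mul, sumSq]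
  · rintro ⟨c, hc, h⟩
    obtain ⟨A, hA, hf⟩ := exists_matrix_of_sumSq_map_sub (by decide) f.surjective h
    refine ⟨A, f 0, c, ?_, hc, hA, hf⟩
    rw [isUnit_iff_isUnit_det]
    refine isUnit_det_of_left_inverse (B := c⁻¹ • Aᵀ) ?_
    rw [smul_mul, hA, smul_smul, inv_mul_cancel₀ hc, one_smul]

theorem mem_aoTildeSet_of_hammingNorm_sub_eq
    (hf : ∀ x y, hammingNorm (f x - f y) = hammingNorm (x - y)) : f ∈ aoTildeSet m := by
  refine mem_aoTildeSet_iff.2 ⟨1, one_ne_zero, fun x y => ?_⟩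
  rw [sumSq_eq_hammingNorm, sumSq_eq_hammingNorm, hf, one_mul]

/-- The map `x ↦ x + ⟨v, x⟩ v`. Since `1 = -2` in `ZMod 3`, it is the orthogonal reflection in the
hyperplane `v⊥` when `⟨v, v⟩ = 1`. -/
def ternaryReflection (v x : ι → ZMod 3) : ι → ZMod 3 :=
  x + (v ⬝ᵥ x) • v

theorem ternaryReflection_sub (v x y : ι → ZMod 3) :
    ternaryReflection v (x - y) = ternaryReflection v x - ternaryReflection v y := by
  simp only [ternaryReflection, dotProduct_sub, sub_smul]
  abel

theorem sumSq_ternaryReflection {v : ι → ZMod 3} (hv : sumSq v = 1) (x : ι → ZMod 3) :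
    sumSq (ternaryReflection v x) = sumSq x := by
  have three_eq_zero : (3 : ZMod 3) = 0 := rfl
  rw [ternaryReflection, sumSq_add, sumSq_smul, hv, dotProduct_smul, smul_eq_mul, dotProduct_comm x]
  linear_combination (v ⬝ᵥ x) ^ 2 * three_eq_zero

theorem ternaryReflection_involutive {v : ι → ZMod 3} (hv : sumSq v = 1) :
    (ternaryReflection v).Involutive := fun x => by
  have dotProduct_reflection : v ⬝ᵥ ternaryReflection v x = 2 * (v ⬝ᵥ x) := by
    rw [ternaryReflection, dotProduct_add, dotProduct_smul, ← sumSq, hv, smul_eq_mul]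
    ring
  calc ternaryReflection v (ternaryReflection v x)
      = x + (v ⬝ᵥ x + v ⬝ᵥ ternaryReflection v x) • v := by
        rw [add_smul, ← add_assoc, ternaryReflection, ternaryReflection]
    _ = x := by
      rw [dotProduct_reflection, ← one_add_mul, show (1 + 2 : ZMod 3) = 0 from rfl, zero_mul,
        zero_smul, add_zero]

theorem exists_mem_aoTildeSet_hammingNorm_sub (hm : 4 ≤ m) :
    ∃ f ∈ aoTildeSet m, ∃ x y, hammingNorm (x - y) = 1 ∧ hammingNorm (f x - f y) = 4 := by
  let v : Fin m → ZMod 3 := fun i => if i.val < 4 then 1 else 0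
  let e : Fin m → ZMod 3 := Pi.single ⟨0, by omega⟩ 1
  have card_support : (univ.filter fun i : Fin m => i.val < 4).card = 4 := by
    rw [Fin.card_filter_val_lt, min_eq_right hm]
  have sumSq_v : sumSq v = 1 := by
    rw [sumSq_eq_hammingNorm]
    simp only [hammingNorm, v, ne_eq, ite_eq_right_iff, one_ne_zero, imp_false, not_not,
      card_support]
    rfl
  refine ⟨(ternaryReflection_involutive sumSq_v).toPerm,
    mem_aoTildeSet_iff.2 ⟨1, one_ne_zero, fun x y => ?_⟩, e, 0, ?_, ?_⟩
  · simp only [Function.Involutive.coe_toPerm, ← ternaryReflection_sub,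
      sumSq_ternaryReflection sumSq_v, one_mul]
  · simp [hammingNorm, e, Pi.single_apply, filter_eq']
  · have reflection_ne_zero (i : Fin m) : ternaryReflection v e i ≠ 0 ↔ i.val < 4 := by
      rcases eq_or_ne i ⟨0, by omega⟩ with rfl | hi
      · simpa [ternaryReflection, e, v] using (by decide : (1 + 1 : ZMod 3) ≠ 0)
      · simp [ternaryReflection, e, v, hi]
    simp only [Function.Involutive.coe_toPerm, ← ternaryReflection_sub, sub_zero, hammingNorm,
      reflection_ne_zero, card_support]

end Similitudes

section IsotropyPreservingMaps

theorem sumSq_neg {ι R : Type*} [Fintype ι] [CommRing R] (x : ι → R) : sumSq (-x) = sumSq x := by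
  rw [sumSq, neg_dotProduct_neg, sumSq]

theorem sumSq_sub_comm {ι R : Type*} [Fintype ι] [CommRing R] (x y : ι → R) :
    sumSq (x - y) = sumSq (y - x) := by
  rw [← neg_sub, sumSq_neg]

theorem sumSq_neg_add_sub_of_sumSq_sub_eq_zero {ι R : Type*} [Fintype ι] [CommRing R] [CharP R 3]
    {p q : ι → R} (h : sumSq (p - q) = 0) (y : ι → R) :
    sumSq (-(p + q) - y) = -(sumSq (p - y) + sumSq (q - y)) := by
  have three_eq_zero : (3 : R) = 0 := CharP.cast_eq_zero R 3
  have sum_eq : -(p + q) - y = -((p - y) + (q - y)) := by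
    funext i
    simp only [Pi.sub_apply, Pi.neg_apply, Pi.add_apply]
    linear_combination -y i * three_eq_zero
  rw [← sub_sub_sub_cancel_right p q y, sumSq_sub] at h
  rw [sum_eq, sumSq_neg, sumSq_add]
  linear_combination (sumSq (p - y) + sumSq (q - y)) * three_eq_zero - h

set_option maxRecDepth 100000 in
theorem mem_line_of_forall_sumSq_sub_eq_zero :
    ∀ v : Fin 4 → ZMod 3, sumSq v = 0 → ∀ u,
      (∀ t, sumSq t = 0 → sumSq (t - v) = 0 → sumSq (t - u) = 0) →
        v = 0 ∨ u = 0 ∨ u = v ∨ u = -v := by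
  decide +kernel

set_option maxRecDepth 100000 in
theorem exists_sumSq_ne_zero_sumSq_sub_eq_zero :
    ∀ a : Fin 4 → ZMod 3, sumSq a ≠ 0 → ∀ b, sumSq b ≠ 0 →
      ∃ c, sumSq c ≠ 0 ∧ sumSq (a - c) = 0 ∧ sumSq (c - b) = 0 := by
  decide +kernel

set_option maxRecDepth 100000 in
theorem exists_sumSq_ne_zero_sumSq_sub_ne_zero :
    ∀ d : Fin 4 → ZMod 3, ∃ c, sumSq c ≠ 0 ∧ sumSq (c - d) ≠ 0 := by
  decide +kernel

variable {f : Equiv.Perm (Fin 4 → ZMod 3)}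
  (hf : ∀ x y, sumSq (f x - f y) = 0 ↔ sumSq (x - y) = 0)
include hf

-- The line through two points at isotropic difference consists of the points isotropic to every
-- common isotropic neighbour of the two, hence is mapped to a line.
theorem map_neg_add_of_sumSq_sub_eq_zero {p q : Fin 4 → ZMod 3} (h : sumSq (p - q) = 0) :
    f (-(p + q)) = -(f p + f q) := by
  have three_eq_zero (x : Fin 4 → ZMod 3) : x + x + x = 0 := by decide +revert
  rcases eq_or_ne p q with rfl | hpq
  · rw [neg_eq_of_add_eq_zero_right (three_eq_zero p),
      neg_eq_of_add_eq_zero_right (three_eq_zero (f p))]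
  have isotropic_to_third (t) (hp : sumSq t = 0) (hq : sumSq (t - (f q - f p)) = 0) :
      sumSq (t - (f (-(p + q)) - f p)) = 0 := by
    obtain ⟨s, rfl⟩ : ∃ s, t = f s - f p := ⟨f.symm (t + f p), by simp⟩
    rw [sub_sub_sub_cancel_right, hf, sumSq_sub_comm] at hq ⊢
    rw [hf, sumSq_sub_comm] at hp
    rw [sumSq_neg_add_sub_of_sumSq_sub_eq_zero h, hp, hq, add_zero, neg_zero]
  rcases mem_line_of_forall_sumSq_sub_eq_zero (f q - f p) (by rwa [hf, sumSq_sub_comm]) _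
    isotropic_to_third with h | h | h | h
  · exact absurd (f.injective (sub_eq_zero.1 h)) hpq.symm
  · have := f.injective (sub_eq_zero.1 h)
    exact absurd (by linear_combination this + three_eq_zero p) hpq
  · have := f.injective (sub_left_injective h)
    exact absurd (by linear_combination -this - three_eq_zero q) hpq
  · linear_combination h + three_eq_zero (f p)

theorem sumSq_map_sub_mul_eq_of_sumSq_sub_eq_zero {p q y : Fin 4 → ZMod 3}
    (hpq : sumSq (p - q) = 0) (hp : sumSq (p - y) ≠ 0) (hq : sumSq (q - y) ≠ 0) :
    sumSq (f p - f y) * sumSq (p - y) = sumSq (f q - f y) * sumSq (q - y) := by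
  have third_iff := hf (-(p + q)) y
  rw [map_neg_add_of_sumSq_sub_eq_zero hf hpq, sumSq_neg_add_sub_of_sumSq_sub_eq_zero hpq,
    sumSq_neg_add_sub_of_sumSq_sub_eq_zero ((hf p q).2 hpq), neg_eq_zero, neg_eq_zero] at third_iff
  have products_eq : ∀ a b A B : ZMod 3, a ≠ 0 → b ≠ 0 → A ≠ 0 → B ≠ 0 →
      (A + B = 0 ↔ a + b = 0) → A * a = B * b := by decide
  exact products_eq _ _ _ _ hp hq ((hf p y).not.2 hp) ((hf q y).not.2 hq) third_iff

theorem sumSq_map_sub_mul_eq {p q y : Fin 4 → ZMod 3} (hp : sumSq (p - y) ≠ 0)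
    (hq : sumSq (q - y) ≠ 0) :
    sumSq (f p - f y) * sumSq (p - y) = sumSq (f q - f y) * sumSq (q - y) := by
  obtain ⟨c, hc, hpc, hcq⟩ := exists_sumSq_ne_zero_sumSq_sub_eq_zero _ hp _ hq
  obtain ⟨r, rfl⟩ : ∃ r, c = r - y := ⟨c + y, (add_sub_cancel_right c y).symm⟩
  rw [sub_sub_sub_cancel_right] at hpc hcq
  rw [sumSq_map_sub_mul_eq_of_sumSq_sub_eq_zero hf hpc hp hc,
    sumSq_map_sub_mul_eq_of_sumSq_sub_eq_zero hf hcq hc hq]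

theorem sumSq_map_sub_mul_eq_mul {p q x y : Fin 4 → ZMod 3} (hpx : sumSq (p - x) ≠ 0)
    (hqy : sumSq (q - y) ≠ 0) :
    sumSq (f p - f x) * sumSq (p - x) = sumSq (f q - f y) * sumSq (q - y) := by
  obtain ⟨c, hc, hc'⟩ := exists_sumSq_ne_zero_sumSq_sub_ne_zero (y - x)
  obtain ⟨z, rfl⟩ : ∃ z, c = z - x := ⟨c + x, (add_sub_cancel_right c x).symm⟩
  rw [sub_sub_sub_cancel_right] at hc'
  calc sumSq (f p - f x) * sumSq (p - x)
      = sumSq (f z - f x) * sumSq (z - x) := sumSq_map_sub_mul_eq hf hpx hc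
    _ = sumSq (f x - f z) * sumSq (x - z) := by rw [sumSq_sub_comm, sumSq_sub_comm z]
    _ = sumSq (f y - f z) * sumSq (y - z) :=
        sumSq_map_sub_mul_eq hf (by rwa [sumSq_sub_comm]) (by rwa [sumSq_sub_comm])
    _ = sumSq (f z - f y) * sumSq (z - y) := by rw [sumSq_sub_comm, sumSq_sub_comm y]
    _ = sumSq (f q - f y) * sumSq (q - y) := sumSq_map_sub_mul_eq hf hc' hqy

theorem mem_aoTildeSet_of_sumSq_sub_eq_zero_iff : f ∈ aoTildeSet 4 := by
  obtain ⟨e, he, -⟩ := exists_sumSq_ne_zero_sumSq_sub_ne_zero 0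
  rw [← sub_zero e] at he
  have map_ne_zero := (hf e 0).not.2 he
  refine mem_aoTildeSet_iff.2 ⟨sumSq (f e - f 0) * sumSq (e - 0), mul_ne_zero map_ne_zero he,
    fun x y => ?_⟩
  by_cases hxy : sumSq (x - y) = 0
  · rw [hxy, mul_zero, hf, hxy]
  have mul_self_eq_one (a : ZMod 3) (ha : a ≠ 0) : a * a = 1 := by decide +revert
  rw [sumSq_map_sub_mul_eq_mul hf he hxy, mul_assoc, mul_self_eq_one _ hxy, mul_one]

end IsotropyPreservingMaps

section Automorphisms

variable {m w : ℕ} {π : Equiv.Perm (Fin m → ZMod 3)}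

theorem sumSq_eq_zero_iff {x : Fin m → ZMod 3} (hm : m ≤ 5) :
    sumSq x = 0 ↔ x = 0 ∨ hammingNorm x = 3 := by
  have norm_le := hammingNorm_le_card_fintype (x := x)
  rw [Fintype.card_fin] at norm_le
  rw [sumSq_eq_hammingNorm, ZMod.natCast_eq_zero_iff, ← hammingNorm_eq_zero]
  omega

theorem krawtchouk_three_three_cast {d : ℕ} (hm : m = 4 ∨ m = 5) (hd : d ≤ m) :
    (krawtchouk 3 m 3 d : ZMod 2) = if d = 3 then 1 else 0 := by
  rcases hm with rfl | rfl <;> decide +revert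

theorem isInvariantKernel_krawtchouk_three_iff (hm : m = 4 ∨ m = 5) :
    IsInvariantKernel π (fun x => (krawtchouk 3 m 3 (hammingNorm x) : ZMod 2)) ↔
      ∀ x y, hammingNorm (π x - π y) = 3 ↔ hammingNorm (x - y) = 3 := by
  refine forall₂_congr fun x y => ?_
  have norm_le {z : Fin m → ZMod 3} : hammingNorm z ≤ m := by
    simpa using hammingNorm_le_card_fintype (x := z)
  dsimp only
  rw [krawtchouk_three_three_cast hm norm_le, krawtchouk_three_three_cast hm norm_le]
  split_ifs <;> simp [*]

theorem forall_hammingNorm_sub_eq_three_iff (hm : m ≤ 5) :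
    (∀ x y, hammingNorm (π x - π y) = 3 ↔ hammingNorm (x - y) = 3) ↔
      ∀ x y, sumSq (π x - π y) = 0 ↔ sumSq (x - y) = 0 := by
  refine forall₂_congr fun x y => ?_
  rcases eq_or_ne x y with rfl | hxy
  · simp
  · simp [sumSq_eq_zero_iff hm, sub_eq_zero, hxy]

theorem mem_aoTildeSet_of_hammingNorm_sub_eq_three_iff {π : Equiv.Perm (Fin 5 → ZMod 3)}
    (hπ : ∀ x y, hammingNorm (π x - π y) = 3 ↔ hammingNorm (x - y) = 3) : π ∈ aoTildeSet 5 := by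
  have sphere_invariant :
      IsInvariantKernel π fun x => if hammingNorm x = 3 then (1 : ℕ) else 0 := fun x y => by
    simp only [hπ]
  have count_invariant := isInvariantKernel_circulant_mulVec sphere_invariant sphere_invariant
  rw [circulant_sphere_mulVec_sphere] at count_invariant
  have cast_eq : ∀ d ≤ 5, ∀ d' ≤ 5,
      intersectionNumber (5 - d) d 3 = intersectionNumber (5 - d') d' 3 →
        (d : ZMod 3) = d' := by decide
  refine mem_aoTildeSet_iff.2 ⟨1, one_ne_zero, fun x y => ?_⟩
  rw [one_mul, sumSq_eq_hammingNorm, sumSq_eq_hammingNorm]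
  exact cast_eq _ hammingNorm_le_card_fintype _ hammingNorm_le_card_fintype (count_invariant x y)

theorem isInvariantKernel_krawtchouk_three_iff_mem_aoTildeSet (hm : m = 4 ∨ m = 5) :
    IsInvariantKernel π (fun x => (krawtchouk 3 m 3 (hammingNorm x) : ZMod 2)) ↔
      π ∈ aoTildeSet m := by
  rw [isInvariantKernel_krawtchouk_three_iff hm]
  constructor
  · rcases hm with rfl | rfl
    · rw [forall_hammingNorm_sub_eq_three_iff (by decide)]
      exact mem_aoTildeSet_of_sumSq_sub_eq_zero_iff
    · exact mem_aoTildeSet_of_hammingNorm_sub_eq_three_iff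
  · intro hπ
    obtain ⟨c, hc, h⟩ := mem_aoTildeSet_iff.1 hπ
    rw [forall_hammingNorm_sub_eq_three_iff (by omega)]
    intro x y
    rw [h, mul_eq_zero_iff_left hc]

theorem hammingNorm_map_sub_eq (hm : 6 ≤ m) (hw : 1 ≤ w) (hwm : w ≤ m) (h : 3 ∣ w ∨ 7 ≤ m)
    (hπ : IsInvariantKernel π fun x => (krawtchouk 3 m w (hammingNorm x) : ZMod 2))
    (x y : Fin m → ZMod 3) : hammingNorm (π x - π y) = hammingNorm (x - y) := by
  have hammingNorm_sub (a b : Fin m → ZMod 3) : hammingNorm (a - b) = hammingDist a b := by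
    rw [hammingDist_comm, hammingDist_eq_hammingNorm, neg_add_eq_sub]
  rw [← Fintype.card_fin m] at hm hwm h
  simp only [hammingNorm_sub]
  refine hammingDist_map_eq π (fun a b => ?_) x y
  rw [← hammingNorm_sub, ← hammingNorm_sub]
  exact hammingNorm_sub_eq_one_iff hm hw hwm h (by rwa [Fintype.card_fin]) a b

theorem statement4_general (m w : ℕ) (hm : 4 ≤ m) (hw1 : 1 ≤ w) (hwm : w ≤ m)
    (h3 : 3 ∣ w ∨ 7 ≤ m) (K : Type) [Field K] [CharP K 2] (α : K) (hα : IsPrimitiveRoot α 3) :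
    codeAut (abelianCode 3 m {w} K α) ⊆ aoTildeSet m ∧
    (codeAut (abelianCode 3 m {w} K α) = aoTildeSet m ↔ (m = 4 ∨ m = 5) ∧ w = 3) := by
  have mem_iff {π} := mem_codeAut_abelianCode_iff (m := m) (w := w) (π := π) (by decide) hα
  by_cases hm6 : 6 ≤ m
  · have isometry {π} (hπ) := hammingNorm_map_sub_eq hm6 hw1 hwm h3 ((mem_iff (π := π)).1 hπ)
    refine ⟨fun π hπ => mem_aoTildeSet_of_hammingNorm_sub_eq (isometry hπ),
      fun h_eq => ?_, by omega⟩
    obtain ⟨f, hf, x, y, hxy, hfxy⟩ := exists_mem_aoTildeSet_hammingNorm_sub hm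
    have := isometry (h_eq ▸ hf) x y
    omega
  · have hm45 : m = 4 ∨ m = 5 := by omega
    obtain rfl : w = 3 := by omega
    have codeAut_eq : codeAut (abelianCode 3 m {3} K α) = aoTildeSet m := by
      ext π
      rw [mem_iff, isInvariantKernel_krawtchouk_three_iff_mem_aoTildeSet hm45]
    exact ⟨codeAut_eq.le, iff_of_true codeAut_eq ⟨hm45, rfl⟩⟩

end Automorphisms

/-- For `m ≥ 4` and `1 ≤ w ≤ m` with `3 ∣ w` and `m` even, the
automorphism group of `C(3, m, {w})` is a subgroup of `AÕ(m, 3) = Z_3^m ⋊ Õ(m, 3)`,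
with equality iff `(m, w) = (4, 3)`. -/
theorem statement4 (m w : ℕ) (hm : 4 ≤ m) (hw1 : 1 ≤ w) (hwm : w ≤ m)
    (h3 : 3 ∣ w) (heven : Even m)
    (K : Type) [Field K] [CharP K 2] (α : K) (hα : IsPrimitiveRoot α 3) :
    codeAut (abelianCode 3 m {w} K α) ⊆ aoTildeSet m ∧
    (codeAut (abelianCode 3 m {w} K α) = aoTildeSet m ↔ (m = 4 ∧ w = 3)) := by
  obtain ⟨subset, eq_iff⟩ := statement4_general m w hm hw1 hwm (.inl h3) K α hα
  exact ⟨subset, eq_iff.trans (by obtain ⟨k, rfl⟩ := heven; omega)⟩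
end

section
/- Let 1 ≤ d ≤ m−1. For every line L ∈ H_1 (an axis-aligned hypercube in [n]^m with exactly one free coordinate), there exist axis-aligned hypercubes H_1, H_2, …, H_{2^{d−1}}, each with exactly d free coordinates, such that L = ⋂_{i=1}^{2^{d−1}} H_i. -/
/-!
Freeing further coordinates of a hypercube with set `J` of free coordinates gives larger
hypercubes, and intersecting these intersects their sets of free coordinates. Choose `A ⊋ J` with
`d + 1` elements: the `d`-element sets `A \ {t}`, for `t ∈ A \ J`, meet exactly in `J`. There are
`d + 1 - |J|` of them, hence `d ≤ 2 ^ (d - 1)` in the case of a line, and repeating some of them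
gives the required number.
-/

open Matrix

/-- `aaCube d H` : `H` is an axis-aligned hypercube in `[n]^m` with exactly `d` free
coordinates, i.e. `H = S_1 × ⋯ × S_m` where `S_i = [n]` for the `d` indices `i` in some
set `J` and `S_i` is a singleton for `i ∉ J`. -/
def aaCube {n m : ℕ} (d : ℕ) (H : Set (Fin m → Fin n)) : Prop :=
  ∃ (J : Finset (Fin m)) (S : Fin m → Set (Fin n)),
    J.card = d ∧
    (∀ i ∈ J, S i = Set.univ) ∧
    (∀ i ∉ J, ∃ a, S i = {a}) ∧
    H = { v | ∀ i, v i ∈ S i }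

theorem iInter_coe_erase_of_ssubset {α : Type*} [DecidableEq α] {J A : Finset α} (hJA : J ⊂ A) :
    ⋂ t : ↥(A \ J), (A.erase t : Set α) = J := by
  have : Nonempty ↥(A \ J) := (Finset.sdiff_nonempty.mpr hJA.not_subset).to_subtype
  calc ⋂ t : ↥(A \ J), (A.erase t : Set α)
      = ↑A \ ⋃ t : ↥(A \ J), {(t : α)} := by simp only [Finset.coe_erase, Set.sdiff_iUnion]
    _ = ↑A \ (↑A \ ↑J) := by
        congr 1
        ext i
        simp
    _ = ↑J := Set.sdiff_sdiff_cancel_left (Finset.coe_subset.mpr hJA.subset)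

theorem exists_finset_card_eq_iInter_eq {α κ : Type*} [Fintype α] [Fintype κ] {J : Finset α}
    {d : ℕ} (hJd : J.card ≤ d) (hdα : d < Fintype.card α)
    (hdκ : d < J.card + Fintype.card κ) :
    ∃ K : κ → Finset α, (∀ k, (K k).card = d) ∧ ⋂ k, (K k : Set α) = J := by
  classical
  obtain ⟨A, hJA, hA⟩ := Finset.exists_superset_card_eq (Nat.le_succ_of_le hJd) hdα
  have hJA' : J ⊂ A := hJA.ssubset_of_ne (by rintro rfl; omega)
  obtain ⟨f, hf⟩ : ∃ f : κ → ↥(A \ J), Function.Surjective f := by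
    have : Nonempty ↥(A \ J) := (Finset.sdiff_nonempty.mpr hJA'.not_subset).to_subtype
    have hcard : Fintype.card ↥(A \ J) ≤ Fintype.card κ := by
      rw [Fintype.card_coe, Finset.card_sdiff_of_subset hJA]
      omega
    obtain ⟨e⟩ := Function.Embedding.nonempty_of_card_le hcard
    exact ⟨Function.invFun e, Function.invFun_surjective e.injective⟩
  refine ⟨fun k ↦ A.erase (f k), fun k ↦ ?_, ?_⟩
  · have hk : (f k : α) ∈ A := Finset.sdiff_subset (f k).property
    rw [Finset.card_erase_of_mem hk, hA, Nat.succ_sub_one]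
  · rw [hf.iInter_comp fun t : ↥(A \ J) ↦ (A.erase t : Set α), iInter_coe_erase_of_ssubset hJA']

theorem aaCube_iff_exists_pi_compl {n m d : ℕ} {H : Set (Fin m → Fin n)} :
    aaCube d H ↔ ∃ (J : Finset (Fin m)) (S : Fin m → Set (Fin n)),
      J.card = d ∧ (∀ i ∉ J, ∃ a, S i = {a}) ∧ H = Set.pi (↑J)ᶜ S := by
  classical
  constructor
  · rintro ⟨J, S, hJ, hfree, hfixed, rfl⟩
    refine ⟨J, S, hJ, hfixed, Set.ext fun v ↦ ⟨fun hv i _ ↦ hv i, fun hv i ↦ ?_⟩⟩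
    by_cases hi : i ∈ J
    · simp only [hfree i hi, Set.mem_univ]
    · exact hv i hi
  · rintro ⟨J, S, hJ, hfixed, rfl⟩
    refine ⟨J, fun i ↦ if i ∈ J then Set.univ else S i, hJ, fun i hi ↦ if_pos hi,
      fun i hi ↦ by simpa only [if_neg hi] using hfixed i hi,
      Set.ext fun v ↦ forall_congr' fun i ↦ ?_⟩
    by_cases hi : i ∈ J <;> simp [hi]

theorem statement8_general {n m c d : ℕ} {κ : Type*} [Fintype κ] (hcd : c ≤ d) (hdm : d < m)
    (hdκ : d < c + Fintype.card κ) {H : Set (Fin m → Fin n)} (hH : aaCube c H) :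
    ∃ Hs : κ → Set (Fin m → Fin n), (∀ k, aaCube d (Hs k)) ∧ H = ⋂ k, Hs k := by
  obtain ⟨J, S, rfl, hfixed, rfl⟩ := aaCube_iff_exists_pi_compl.mp hH
  obtain ⟨K, hKcard, hKJ⟩ := exists_finset_card_eq_iInter_eq hcd (by simpa using hdm) hdκ
  have hJK (k : κ) : J ⊆ K k := Finset.coe_subset.mp (hKJ ▸ Set.iInter_subset _ k)
  refine ⟨fun k ↦ Set.pi (↑(K k))ᶜ S, fun k ↦ ?_, ?_⟩
  · exact aaCube_iff_exists_pi_compl.mpr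
      ⟨K k, S, hKcard k, fun i hi ↦ hfixed i fun hiJ ↦ hi (hJK k hiJ), rfl⟩
  · rw [← Set.pi_iUnion_eq_iInter_pi, ← Set.compl_iInter, hKJ]

/-- For `1 ≤ d ≤ m − 1`, every line (axis-aligned hypercube with exactly
one free coordinate) in `[n]^m` is an intersection of `2^(d−1)` axis-aligned hypercubes,
each with exactly `d` free coordinates. -/
theorem statement8 {n m : ℕ} (d : ℕ) (hd1 : 1 ≤ d) (hd2 : d ≤ m - 1)
    (L : Set (Fin m → Fin n)) (hL : aaCube 1 L) :
    ∃ Hs : Fin (2 ^ (d - 1)) → Set (Fin m → Fin n),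
      (∀ i, aaCube d (Hs i)) ∧ L = ⋂ i, Hs i := by
  have hd : d - 1 < 2 ^ (d - 1) := Nat.lt_two_pow_self
  exact statement8_general hd1 (by omega) (by rw [Fintype.card_fin]; omega) hL
end

section
/- Let n ≥ 3, 1 ≤ r ≤ m−1, and let f : [n]^m → [n]^m be an automorphism of the dual Berman code DB_n(r,m). Then for every line L ∈ H_1 (an axis-aligned hypercube with exactly one free coordinate), the image f(L) is also a line in H_1. -/
open Matrix

/-- The dual Berman code `DB_n(r, m)`, defined recursively.  Coordinates are indexed by
`[n]^m = (Fin m → Fin n)`; the first coordinate of the index is the block index of the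
concatenation `(u + u_0 | u + u_1 | … | u + u_{n-2} | u)`. -/
def bermanDual (n : ℕ) : (m : ℕ) → ℕ → Set ((Fin m → Fin n) → ZMod 2)
  | 0, _ => Set.univ
  | m + 1, 0 => { c | ∃ x : ZMod 2, ∀ v, c v = x }
  | m + 1, r + 1 =>
      if m + 1 ≤ r + 1 then Set.univ
      else
        { c | ∃ (u : (Fin m → Fin n) → ZMod 2)
                (w : Fin n → (Fin m → Fin n) → ZMod 2),
            u ∈ bermanDual n m (r + 1) ∧
            (∀ l : Fin n, (l : ℕ) < n - 1 → w l ∈ bermanDual n m r) ∧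
            (∀ l : Fin n, (l : ℕ) = n - 1 → w l = 0) ∧
            ∀ v : Fin (m + 1) → Fin n,
              c v = u (fun k => v k.succ) + w (v 0) (fun k => v k.succ) }

/-- The dual of a binary code. -/
def dualCode {I : Type} [Fintype I] (C : Set (I → ZMod 2)) : Set (I → ZMod 2) :=
  { c | ∀ d ∈ C, ∑ i, c i * d i = 0 }

/-- The Berman code `B_n(r, m)` is the dual code of the dual Berman code `DB_n(r, m)`. -/
def berman (n m r : ℕ) : Set ((Fin m → Fin n) → ZMod 2) :=
  dualCode (bermanDual n m r)

/-! The indicator of an axis-aligned cube with `m - r` free coordinates is a codeword of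
`DB_n(r, m)`, and for `n ≥ 3` these are exactly the codewords of minimum weight. An automorphism
preserves weights, so it maps such cubes to such cubes. Since `r ≥ 1`, every cube with
`d ≤ m - r` free coordinates is the intersection of the cubes with `m - r` free coordinates
containing it. All their images contain a common point, so the image of the smaller cube is an
intersection of cubes through this point, which is again a cube; counting points shows that it
has `d` free coordinates. -/

open Function

section AxisCube

variable {ι κ α : Type*}

/-- The axis-aligned cube through `p` whose set of free coordinates is `J`. Unlike `aaCube`, it
records a base point, which makes intersections of cubes through a common point computable. -/
def axisCube (p : ι → α) (J : Set ι) : Set (ι → α) :=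
  {v | ∀ i ∉ J, v i = p i}

theorem self_mem_axisCube (p : ι → α) (J : Set ι) : p ∈ axisCube p J :=
  fun _ _ => rfl

theorem axisCube_univ (p : ι → α) : axisCube p Set.univ = Set.univ := by
  simp [axisCube]

theorem axisCube_eq_of_mem {p q : ι → α} {J : Set ι} (h : q ∈ axisCube p J) :
    axisCube p J = axisCube q J := by
  ext v
  exact forall₂_congr fun i hi => by rw [h i hi]

theorem iInter_axisCube (p : ι → α) (J : κ → Set ι) :
    ⋂ k, axisCube p (J k) = axisCube p (⋂ k, J k) := by
  ext v
  simp only [axisCube, Set.mem_iInter, Set.mem_ofPred_eq, not_forall]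
  exact ⟨fun h i ⟨k, hk⟩ => h k i hk, fun h k i hk => h i ⟨k, hk⟩⟩

theorem ncard_axisCube [Finite ι] (p : ι → α) (J : Set ι) :
    (axisCube p J).ncard = Nat.card α ^ J.ncard := by
  classical
  let e : axisCube p J ≃ (J → α) :=
    { toFun v i := v.1 i
      invFun u := ⟨fun i => if hi : i ∈ J then u ⟨i, hi⟩ else p i, fun i hi => by simp [hi]⟩
      left_inv v := by
        ext i
        by_cases hi : i ∈ J
        · simp [hi]
        · simp [hi, v.2 i hi]
      right_inv u := by simp }
  rw [← Nat.card_coe_set_eq, Nat.card_congr e, Nat.card_fun, Nat.card_coe_set_eq]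

theorem iInter_superset_ncard_eq [Finite ι] {J : Set ι} {k : ℕ} (hJ : J.ncard ≤ k)
    (hk : k ≤ Nat.card ι - 1) : ⋂ K : {K : Set ι // J ⊆ K ∧ K.ncard = k}, K.1 = J := by
  refine subset_antisymm (fun j hj => ?_) (Set.subset_iInter fun K => K.2.1)
  by_contra hjJ
  obtain ⟨K, hJK, hKj, hK⟩ : ∃ K, J ⊆ K ∧ K ⊆ {j}ᶜ ∧ K.ncard = k :=
    Set.exists_subsuperset_card_eq (Set.subset_compl_singleton_iff.mpr hjJ) hJ
      (by rwa [Set.ncard_compl, Set.ncard_singleton])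
  exact hKj (Set.mem_iInter.mp hj ⟨K, hJK, hK⟩) rfl

theorem aaCube_iff_exists_axisCube {n m d : ℕ} [NeZero n] {H : Set (Fin m → Fin n)} :
    aaCube d H ↔ ∃ p J, J.ncard = d ∧ H = axisCube p J := by
  classical
  constructor
  · rintro ⟨J, S, hJ, hfree, hfixed, rfl⟩
    choose! a ha using hfixed
    refine ⟨a, J, by rw [Set.ncard_coe_finset, hJ], Set.ext fun v => forall_congr' fun i => ?_⟩
    by_cases hi : i ∈ J
    · simp [hi, hfree i hi]
    · simp [hi, ha i hi]
  · rintro ⟨p, J, hJ, rfl⟩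
    refine ⟨J.toFinset, fun i => if i ∈ J then Set.univ else {p i}, ?_, ?_, ?_, ?_⟩
    · rw [← Set.ncard_eq_toFinset_card', hJ]
    · simp +contextual
    · intro i hi
      exact ⟨p i, if_neg (by simpa using hi)⟩
    · refine Set.ext fun v => forall_congr' fun i => ?_
      by_cases hi : i ∈ J <;> simp [hi]

end AxisCube

section SuccCoordinates

variable {m : ℕ} {α : Type*}

theorem exists_eq_insert_zero_image_succ_or_eq_image_succ (J : Set (Fin (m + 1))) :
    ∃ K : Set (Fin m), J = insert 0 (Fin.succ '' K) ∨ J = Fin.succ '' K := by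
  refine ⟨Fin.succ ⁻¹' J, ?_⟩
  rw [Set.image_preimage_eq_inter_range, Fin.range_succ, ← Set.sdiff_eq]
  by_cases h : 0 ∈ J
  · exact .inl (Set.insert_sdiff_self_of_mem h).symm
  · exact .inr (Set.sdiff_singleton_eq_self h).symm

theorem zero_notMem_image_succ (K : Set (Fin m)) : 0 ∉ Fin.succ '' K := by
  simp [Fin.succ_ne_zero]

theorem ncard_image_succ (K : Set (Fin m)) : (Fin.succ '' K).ncard = K.ncard :=
  Set.ncard_image_of_injective K (Fin.succ_injective m)

theorem ncard_insert_zero_image_succ (K : Set (Fin m)) :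
    (insert 0 (Fin.succ '' K)).ncard = K.ncard + 1 := by
  rw [Set.ncard_insert_of_notMem (zero_notMem_image_succ K), ncard_image_succ]

theorem cons_mem_axisCube_insert_zero {p : Fin (m + 1) → α} {K : Set (Fin m)} {l : α}
    {v : Fin m → α} :
    (Fin.cons l v : Fin (m + 1) → α) ∈ axisCube p (insert 0 (Fin.succ '' K)) ↔
      v ∈ axisCube (Fin.tail p) K := by
  simp [axisCube, Fin.forall_fin_succ, (Fin.succ_injective m).mem_set_image, Fin.tail,
    -Set.mem_image]

theorem cons_mem_axisCube_image_succ {p : Fin (m + 1) → α} {K : Set (Fin m)} {l : α}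
    {v : Fin m → α} :
    (Fin.cons l v : Fin (m + 1) → α) ∈ axisCube p (Fin.succ '' K) ↔
      l = p 0 ∧ v ∈ axisCube (Fin.tail p) K := by
  simp [axisCube, Fin.forall_fin_succ, (Fin.succ_injective m).mem_set_image,
    zero_notMem_image_succ, Fin.tail, -Set.mem_image]

end SuccCoordinates

section Slice

variable {m n : ℕ} {α β : Type*}

/-- The block of the word `c` at the index `l` of its first coordinate. -/
def slice (c : (Fin (m + 1) → α) → β) (l : α) : (Fin m → α) → β :=
  fun v => c (Fin.cons l v)

theorem ext_slice {c c' : (Fin (m + 1) → α) → β} (h : ∀ l, slice c l = slice c' l) : c = c' := by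
  funext v
  simpa [slice] using congrFun (h (v 0)) (Fin.tail v)

theorem exists_slice_ne_zero [Zero β] {c : (Fin (m + 1) → α) → β} (hc : c ≠ 0) :
    ∃ l, slice c l ≠ 0 := by
  contrapose! hc
  exact ext_slice hc

theorem hammingNorm_eq_ncard_support {ι : Type*} [Fintype ι] [Zero β] [DecidableEq β]
    (c : ι → β) : hammingNorm c = (support c).ncard := by
  rw [hammingNorm, ← Set.ncard_coe_finset]
  simp [support]

theorem hammingNorm_eq_sum_slice [Fintype α] [Zero β] [DecidableEq β]
    (c : (Fin (m + 1) → α) → β) : hammingNorm c = ∑ l, hammingNorm (slice c l) := by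
  simp only [hammingNorm, Finset.card_filter]
  rw [← (Fin.consEquiv fun _ => α).sum_comp, Fintype.sum_prod_type]
  rfl

theorem sum_hammingNorm_slice_le [Fintype α] [Zero β] [DecidableEq β]
    (c : (Fin (m + 1) → α) → β) (s : Finset α) :
    ∑ l ∈ s, hammingNorm (slice c l) ≤ hammingNorm c := by
  rw [hammingNorm_eq_sum_slice]
  exact Finset.sum_le_univ_sum_of_nonneg fun _ => Nat.zero_le _

theorem hammingNorm_slice_le [Fintype α] [Zero β] [DecidableEq β]
    (c : (Fin (m + 1) → α) → β) (l : α) : hammingNorm (slice c l) ≤ hammingNorm c := by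
  simpa using sum_hammingNorm_slice_le c {l}

theorem support_eq_axisCube_of_forall_slice_eq [Zero β] {c : (Fin (m + 1) → α) → β}
    {u : (Fin m → α) → β} (hu : ∀ l, slice c l = u) {p : Fin m → α} {K : Set (Fin m)}
    (hK : support u = axisCube p K) (a : α) :
    support c = axisCube (Fin.cons a p : Fin (m + 1) → α) (insert 0 (Fin.succ '' K)) := by
  ext v
  cases v using Fin.consCases with
  | cons l v => rw [cons_mem_axisCube_insert_zero, Fin.tail_cons, ← hK, ← hu l]; rfl

theorem support_eq_axisCube_of_forall_ne_slice_eq_zero [Zero β] {c : (Fin (m + 1) → α) → β}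
    {a : α} (ha : ∀ l ≠ a, slice c l = 0) {p : Fin m → α} {K : Set (Fin m)}
    (hK : support (slice c a) = axisCube p K) :
    support c = axisCube (Fin.cons a p : Fin (m + 1) → α) (Fin.succ '' K) := by
  ext v
  cases v using Fin.consCases with
  | cons l v =>
    rw [cons_mem_axisCube_image_succ, Fin.tail_cons, Fin.cons_zero, ← hK]
    by_cases hl : l = a
    · simp [hl, slice]
    · simpa [hl, slice] using congrFun (ha l hl) v

end Slice

section BermanDual

variable {n m r : ℕ}

theorem const_mem_bermanDual (x : ZMod 2) : const _ x ∈ bermanDual n m r := by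
  induction m generalizing r x with
  | zero => trivial
  | succ m ih =>
    cases r with
    | zero => exact ⟨x, fun _ => rfl⟩
    | succ r =>
      rw [bermanDual]
      split_ifs
      · trivial
      · exact ⟨const _ x, 0, ih x, fun _ _ => ih 0, fun _ _ => rfl, by simp⟩

theorem zero_mem_bermanDual : 0 ∈ bermanDual n m r :=
  const_mem_bermanDual 0

theorem add_mem_bermanDual {a b : (Fin m → Fin n) → ZMod 2} (ha : a ∈ bermanDual n m r)
    (hb : b ∈ bermanDual n m r) : a + b ∈ bermanDual n m r := by
  induction m generalizing r with
  | zero => trivial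
  | succ m ih =>
    cases r with
    | zero =>
      obtain ⟨⟨x, hx⟩, ⟨y, hy⟩⟩ := And.intro ha hb
      exact ⟨x + y, fun v => by rw [Pi.add_apply, hx, hy]⟩
    | succ r =>
      rw [bermanDual] at *
      split_ifs at *
      · trivial
      · obtain ⟨u, w, hu, hw, hlast, ha⟩ := ha
        obtain ⟨u', w', hu', hw', hlast', hb⟩ := hb
        refine ⟨u + u', w + w', ih hu hu', fun l hl => ih (hw l hl) (hw' l hl), ?_, fun v => ?_⟩
        · intro l hl
          simp [hlast l hl, hlast' l hl]
        · simp only [Pi.add_apply, ha, hb]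
          ring

theorem sub_mem_bermanDual {a b : (Fin m → Fin n) → ZMod 2} (ha : a ∈ bermanDual n m r)
    (hb : b ∈ bermanDual n m r) : a - b ∈ bermanDual n m r := by
  have hsub : a - b = a + b := funext fun v => CharTwo.sub_eq_add (a v) (b v)
  exact hsub ▸ add_mem_bermanDual ha hb

theorem bermanDual_eq_univ (h : m ≤ r) : bermanDual n m r = Set.univ := by
  rcases m with _ | m
  · rfl
  · obtain ⟨r, rfl⟩ := Nat.exists_eq_add_of_le' (Nat.one_le_of_lt h)
    rw [bermanDual, if_pos h]

theorem bermanDual_subset_succ : bermanDual n m r ⊆ bermanDual n m (r + 1) := by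
  intro c hc
  induction m generalizing r with
  | zero => trivial
  | succ m ih =>
    rcases r with _ | r
    · obtain ⟨x, hx⟩ := hc
      obtain rfl : c = const _ x := funext hx
      exact const_mem_bermanDual x
    rcases le_or_gt (m + 1) (r + 2) with hmr | hmr
    · rw [bermanDual_eq_univ hmr]
      trivial
    · rw [bermanDual, if_neg (by omega)] at *
      obtain ⟨u, w, hu, hw, hlast, hc⟩ := hc
      exact ⟨u, w, ih hu, fun l hl => ih (hw l hl), hlast, hc⟩

theorem mem_bermanDual_succ_iff {c : (Fin (m + 1) → Fin n) → ZMod 2} :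
    c ∈ bermanDual n (m + 1) (r + 1) ↔
      (∀ l, slice c l ∈ bermanDual n m (r + 1)) ∧
        ∀ l k, slice c l - slice c k ∈ bermanDual n m r := by
  rcases le_or_gt m r with hmr | hmr
  · simp [bermanDual_eq_univ, hmr, Nat.le_succ_of_le]
  rw [bermanDual, if_neg (by omega)]
  constructor
  · rintro ⟨u, w, hu, hw, hlast, hc⟩
    have hslice (l) : slice c l = u + w l := funext fun v => by simp [slice, hc]
    have hw (l) : w l ∈ bermanDual n m r := by
      rcases (Nat.le_sub_one_of_lt l.isLt).lt_or_eq with hl | hl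
      · exact hw l hl
      · exact hlast l hl ▸ zero_mem_bermanDual
    refine ⟨fun l => ?_, fun l k => ?_⟩
    · rw [hslice]
      exact add_mem_bermanDual hu (bermanDual_subset_succ (hw l))
    · rw [hslice, hslice, add_sub_add_left_eq_sub]
      exact sub_mem_bermanDual (hw l) (hw k)
  · rintro ⟨hslice, hdiff⟩
    rcases n with _ | n
    · exact ⟨0, 0, zero_mem_bermanDual, nofun, nofun, fun v => (v 0).elim0⟩
    refine ⟨slice c (Fin.last n), fun l => slice c l - slice c (Fin.last n), hslice _,
      fun l _ => hdiff l _, fun l hl => ?_, fun v => ?_⟩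
    · exact sub_eq_zero.mpr (congrArg (slice c) (Fin.ext hl))
    · refine Eq.trans ?_ (add_sub_cancel (slice c (Fin.last n) _) _).symm
      exact congrArg c (Fin.cons_self_tail v).symm

theorem slice_mem_bermanDual_of_slice_eq_zero {c : (Fin (m + 1) → Fin n) → ZMod 2}
    (hc : c ∈ bermanDual n (m + 1) (r + 1)) {k : Fin n} (hk : slice c k = 0) (l : Fin n) :
    slice c l ∈ bermanDual n m r := by
  simpa [hk] using (mem_bermanDual_succ_iff.mp hc).2 l k

theorem indicator_axisCube_mem_bermanDual {p : Fin m → Fin n} {J : Set (Fin m)}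
    (hJ : m - r ≤ J.ncard) : (axisCube p J).indicator 1 ∈ bermanDual n m r := by
  induction m generalizing r with
  | zero => trivial
  | succ m ih =>
    rcases r with _ | r
    · have hJ : J = Set.univ := by
        simpa using Set.eq_of_subset_of_ncard_le (Set.subset_univ J) (by simpa using hJ)
      rw [hJ, axisCube_univ, Set.indicator_univ]
      exact const_mem_bermanDual 1
    rw [mem_bermanDual_succ_iff]
    have hslice (l) : slice ((axisCube p J).indicator 1) l =
        (Fin.cons l ⁻¹' axisCube p J).indicator (1 : (Fin m → Fin n) → ZMod 2) := rfl
    obtain ⟨K, rfl | rfl⟩ := exists_eq_insert_zero_image_succ_or_eq_image_succ J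
    · rw [ncard_insert_zero_image_succ] at hJ
      have hpre (l) : Fin.cons l ⁻¹' axisCube p (insert 0 (Fin.succ '' K)) =
          axisCube (Fin.tail p) K := Set.ext fun _ => cons_mem_axisCube_insert_zero
      simp only [hslice, hpre, sub_self]
      exact ⟨fun _ => ih (by omega), fun _ _ => zero_mem_bermanDual⟩
    · rw [ncard_image_succ] at hJ
      have hmem (l) : slice ((axisCube p (Fin.succ '' K)).indicator 1) l ∈ bermanDual n m r := by
        rw [hslice]
        by_cases hl : l = p 0
        · have hpre : Fin.cons l ⁻¹' axisCube p (Fin.succ '' K) = axisCube (Fin.tail p) K :=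
            Set.ext fun _ => cons_mem_axisCube_image_succ.trans (and_iff_right hl)
          exact hpre ▸ ih (by omega)
        · have hpre : Fin.cons l ⁻¹' axisCube p (Fin.succ '' K) = ∅ :=
            Set.eq_empty_of_forall_notMem fun _ h => hl (cons_mem_axisCube_image_succ.mp h).1
          rw [hpre, Set.indicator_empty]
          exact zero_mem_bermanDual
      exact ⟨fun l => bermanDual_subset_succ (hmem l),
        fun l k => sub_mem_bermanDual (hmem l) (hmem k)⟩

end BermanDual

section MinimumWeight

variable {n m r : ℕ}

theorem support_eq_univ_of_mem_bermanDual_zero {c : (Fin m → Fin n) → ZMod 2}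
    (hc : c ∈ bermanDual n m 0) (h0 : c ≠ 0) : support c = Set.univ := by
  obtain ⟨v, hv⟩ := ne_iff.mp h0
  rcases m with _ | m
  · exact Set.eq_univ_of_forall fun w => Subsingleton.elim v w ▸ hv
  · obtain ⟨x, hx⟩ := hc
    exact Set.eq_univ_of_forall fun w => by rwa [mem_support, hx w, ← hx v]

theorem pow_le_hammingNorm_of_mem_bermanDual {c : (Fin m → Fin n) → ZMod 2}
    (hc : c ∈ bermanDual n m r) (h0 : c ≠ 0) : n ^ (m - r) ≤ hammingNorm c := by
  induction m generalizing r with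
  | zero => simpa [Nat.one_le_iff_ne_zero] using h0
  | succ m ih =>
    rcases r with _ | r
    · simp [hammingNorm_eq_ncard_support, support_eq_univ_of_mem_bermanDual_zero hc h0,
        Set.ncard_univ]
    rw [Nat.add_sub_add_right]
    by_cases hzero : ∃ k, slice c k = 0
    · obtain ⟨k, hk⟩ := hzero
      obtain ⟨l, hl⟩ := exists_slice_ne_zero h0
      exact (ih (slice_mem_bermanDual_of_slice_eq_zero hc hk l) hl).trans
        (hammingNorm_slice_le c l)
    · push Not at hzero
      obtain ⟨l, -⟩ := exists_slice_ne_zero h0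
      calc n ^ (m - r) ≤ n ^ (m - (r + 1) + 1) := Nat.pow_le_pow_right l.pos (by omega)
        _ = ∑ _l : Fin n, n ^ (m - (r + 1)) := by simp [pow_succ']
        _ ≤ ∑ l, hammingNorm (slice c l) :=
          Finset.sum_le_sum fun l _ => ih ((mem_bermanDual_succ_iff.mp hc).1 l) (hzero l)
        _ = hammingNorm c := (hammingNorm_eq_sum_slice c).symm

theorem exists_slice_eq_zero_or_forall_slice_eq (hn : 3 ≤ n)
    {c : (Fin (m + 1) → Fin n) → ZMod 2} (hc : c ∈ bermanDual n (m + 1) (r + 1))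
    (hw : hammingNorm c ≤ n ^ (m - r)) :
    (∃ k, slice c k = 0) ∨ ∀ l k, slice c l = slice c k := by
  -- The difference of two distinct blocks already accounts for the whole weight of `c`,
  -- which leaves nothing for a third block.
  by_contra! ⟨hne, l, k, hlk⟩
  obtain ⟨j, hj⟩ : ∃ j, j ∉ ({l, k} : Finset (Fin n)) := by
    by_contra! h
    have := Finset.card_le_two (a := l) (b := k)
    rw [Finset.eq_univ_of_forall h, Finset.card_fin] at this
    omega
  have hdiff : n ^ (m - r) ≤ hammingNorm (slice c l - slice c k) :=
    pow_le_hammingNorm_of_mem_bermanDual ((mem_bermanDual_succ_iff.mp hc).2 l k)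
      (sub_ne_zero.mpr hlk)
  have htriangle : hammingNorm (slice c l - slice c k) ≤
      hammingNorm (slice c l) + hammingNorm (slice c k) := by
    rw [sub_eq_neg_add, ← hammingDist_eq_hammingNorm, add_comm]
    simpa using hammingDist_triangle (slice c k) 0 (slice c l)
  have hthree := sum_hammingNorm_slice_le c {j, l, k}
  rw [Finset.sum_insert hj, Finset.sum_pair (ne_of_apply_ne _ hlk)] at hthree
  have hpos : 0 < hammingNorm (slice c j) := hammingNorm_pos_iff.mpr (hne j)
  omega

theorem exists_forall_ne_slice_eq_zero {c : (Fin (m + 1) → Fin n) → ZMod 2}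
    (hc : c ∈ bermanDual n (m + 1) (r + 1)) (h0 : c ≠ 0) (hw : hammingNorm c ≤ n ^ (m - r))
    {k : Fin n} (hk : slice c k = 0) : ∃ a, slice c a ≠ 0 ∧ ∀ l ≠ a, slice c l = 0 := by
  obtain ⟨a, ha⟩ := exists_slice_ne_zero h0
  refine ⟨a, ha, fun l hla => ?_⟩
  have hle : n ^ (m - r) ≤ hammingNorm (slice c a) :=
    pow_le_hammingNorm_of_mem_bermanDual (slice_mem_bermanDual_of_slice_eq_zero hc hk a) ha
  have hpair := sum_hammingNorm_slice_le c {l, a}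
  rw [Finset.sum_pair hla] at hpair
  exact hammingNorm_eq_zero.mp (by omega)

theorem exists_support_eq_axisCube_of_hammingNorm_le (hn : 3 ≤ n)
    {c : (Fin m → Fin n) → ZMod 2} (hc : c ∈ bermanDual n m r) (h0 : c ≠ 0)
    (hw : hammingNorm c ≤ n ^ (m - r)) :
    ∃ p J, J.ncard = m - r ∧ support c = axisCube p J := by
  obtain ⟨p, -⟩ := ne_iff.mp h0
  induction m generalizing r with
  | zero =>
    refine ⟨p, Set.univ, by simp, ?_⟩
    rw [axisCube_univ, support_eq_univ_of_mem_bermanDual_zero (Set.mem_univ c) h0]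
  | succ m ih =>
    rcases r with _ | r
    · refine ⟨p, Set.univ, by simp, ?_⟩
      rw [axisCube_univ, support_eq_univ_of_mem_bermanDual_zero hc h0]
    rw [Nat.add_sub_add_right] at hw ⊢
    rcases exists_slice_eq_zero_or_forall_slice_eq hn hc hw with ⟨k, hk⟩ | heq
    · obtain ⟨a, ha, hzero⟩ := exists_forall_ne_slice_eq_zero hc h0 hw hk
      obtain ⟨q, K, hK, hsupp⟩ := ih (slice_mem_bermanDual_of_slice_eq_zero hc hk a) ha
        ((hammingNorm_slice_le c a).trans hw) (Fin.tail p)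
      exact ⟨_, _, (ncard_image_succ K).trans hK,
        support_eq_axisCube_of_forall_ne_slice_eq_zero hzero hsupp⟩
    · obtain ⟨a, ha⟩ := exists_slice_ne_zero h0
      have hsum : n * hammingNorm (slice c a) ≤ n ^ (m - r) := by
        simpa [hammingNorm_eq_sum_slice c, heq _ a] using hw
      have hrm : r < m := by
        by_contra! hmr
        have hpos : 0 < hammingNorm (slice c a) := hammingNorm_pos_iff.mpr ha
        rw [Nat.sub_eq_zero_of_le hmr, pow_zero] at hsum
        nlinarith
      rw [show m - r = m - (r + 1) + 1 by omega] at hsum ⊢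
      obtain ⟨q, K, hK, hsupp⟩ := ih ((mem_bermanDual_succ_iff.mp hc).1 a) ha
        (Nat.le_of_mul_le_mul_left (hsum.trans_eq (pow_succ' _ _)) a.pos) (Fin.tail p)
      exact ⟨_, _, (ncard_insert_zero_image_succ K).trans (congrArg (· + 1) hK),
        support_eq_axisCube_of_forall_slice_eq (heq · a) hsupp a⟩

end MinimumWeight

section Automorphism

variable {n m r : ℕ}

theorem comp_symm_mem_of_mem_codeAut {I : Type} {C : Set (I → ZMod 2)} {f : Equiv.Perm I}
    (hf : f ∈ codeAut C) {c : I → ZMod 2} (hc : c ∈ C) : c ∘ f.symm ∈ C :=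
  hf.subset (Set.mem_image_of_mem _ hc)

theorem exists_image_axisCube_eq_of_ncard_eq (hn : 3 ≤ n) {f : Equiv.Perm (Fin m → Fin n)}
    (hf : f ∈ codeAut (bermanDual n m r)) (p : Fin m → Fin n) {J : Set (Fin m)}
    (hJ : J.ncard = m - r) : ∃ J', f '' axisCube p J = axisCube (f p) J' := by
  let c : (Fin m → Fin n) → ZMod 2 := (axisCube p J).indicator 1 ∘ f.symm
  have hc : c ∈ bermanDual n m r :=
    comp_symm_mem_of_mem_codeAut hf (indicator_axisCube_mem_bermanDual hJ.ge)
  have hsupp : support c = f '' axisCube p J := by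
    rw [support_comp_eq_preimage, f.image_eq_preimage_symm]
    simp
  have hp : f p ∈ f '' axisCube p J := Set.mem_image_of_mem f (self_mem_axisCube p J)
  have h0 : c ≠ 0 := support_nonempty_iff.mp (hsupp ▸ ⟨f p, hp⟩)
  have hw : hammingNorm c = n ^ (m - r) := by
    rw [hammingNorm_eq_ncard_support, hsupp, Set.ncard_image_of_injective _ f.injective,
      ncard_axisCube, Nat.card_fin, hJ]
  obtain ⟨q, J', -, hJ'⟩ := exists_support_eq_axisCube_of_hammingNorm_le hn hc h0 hw.le
  rw [← hsupp, hJ'] at hp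
  exact ⟨J', by rw [← hsupp, hJ', axisCube_eq_of_mem hp]⟩

theorem exists_image_axisCube_eq_of_ncard_le (hn : 3 ≤ n) (hr : 1 ≤ r)
    {f : Equiv.Perm (Fin m → Fin n)} (hf : f ∈ codeAut (bermanDual n m r)) (p : Fin m → Fin n)
    {J : Set (Fin m)} (hJ : J.ncard ≤ m - r) :
    ∃ J', f '' axisCube p J = axisCube (f p) J' := by
  have himage (K : {K : Set (Fin m) // J ⊆ K ∧ K.ncard = m - r}) :
      ∃ K', f '' axisCube p K = axisCube (f p) K' :=
    exists_image_axisCube_eq_of_ncard_eq hn hf p K.2.2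
  choose A hA using himage
  have hcube : axisCube p J =
      ⋂ K : {K : Set (Fin m) // J ⊆ K ∧ K.ncard = m - r}, axisCube p K := by
    rw [iInter_axisCube, iInter_superset_ncard_eq hJ (by rw [Nat.card_fin]; omega)]
  refine ⟨⋂ K, A K, ?_⟩
  rw [hcube, Set.image_iInter f.bijective, ← iInter_axisCube]
  exact Set.iInter_congr hA

theorem statement9_general (n m r d : ℕ) (hn : 3 ≤ n) (hr : 1 ≤ r) (hd : d ≤ m - r)
    (f : Equiv.Perm (Fin m → Fin n)) (hf : f ∈ codeAut (bermanDual n m r))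
    (H : Set (Fin m → Fin n)) (hH : aaCube d H) : aaCube d (f '' H) := by
  have : NeZero n := ⟨by omega⟩
  rw [aaCube_iff_exists_axisCube] at hH ⊢
  obtain ⟨p, J, rfl, rfl⟩ := hH
  obtain ⟨J', hJ'⟩ := exists_image_axisCube_eq_of_ncard_le hn hr hf p hd
  refine ⟨f p, J', ?_, hJ'⟩
  have hcard : n ^ J'.ncard = n ^ J.ncard := by
    simpa [Set.ncard_image_of_injective _ f.injective, ncard_axisCube] using
      congrArg Set.ncard hJ'.symm
  exact Nat.pow_right_injective (by omega) hcard

end Automorphism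

/-- For `n ≥ 3` and `1 ≤ r ≤ m − 1`, every automorphism of the dual
Berman code `DB_n(r, m)` maps every line (axis-aligned hypercube with exactly one free
coordinate) of `[n]^m` to a line. -/
theorem statement9 (n m r : ℕ) (hn : 3 ≤ n) (hr1 : 1 ≤ r) (hr2 : r ≤ m - 1)
    (f : Equiv.Perm (Fin m → Fin n)) (hf : f ∈ codeAut (bermanDual n m r))
    (L : Set (Fin m → Fin n)) (hL : aaCube 1 L) :
    aaCube 1 (⇑f '' L) :=
  statement9_general n m r 1 hn hr1 (by omega) f hf L hL
end

section
/- For any odd integer n ≥ 3, any integer m ≥ 1, and any W ⊆ {0,1,…,m}, the wreath product S_n ≀ S_m in its product action on Z_n^m is a subgroup of the automorphism group of the abelian code C(n,m,W). -/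
open Matrix

/-- The wreath product `S_α ≀ S_m` in its product action on `[α]^m`, realized as the
set of permutations of `Fin m → α` of the form `x ↦ (k ↦ σ_k (x (π⁻¹ k)))`. -/
def wreathPermSet (α : Type) (m : ℕ) : Set (Equiv.Perm (Fin m → α)) :=
  { f | ∃ (σ : Fin m → Equiv.Perm α) (π : Equiv.Perm (Fin m)),
      ∀ (x : Fin m → α) (k : Fin m), f x k = σ k (x (π⁻¹ k)) }

/-!
A permutation of `Z_n` fixes the trivial character and carries a nontrivial one to a function of
sum zero, which is a combination of nontrivial characters because `n` is invertible in `K`. Taking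
products over the coordinates, an element of the wreath product carries the character of frequency
`j` to a combination of characters whose frequencies have, up to a permutation of the coordinates,
the same support as `j`, hence the same Hamming weight. So if the transform of a word vanishes at
all frequencies of weight outside `W`, the same is true of the permuted word.
-/

theorem addChar_map_sum {A M ι : Type*} [AddCommMonoid A] [CommMonoid M] (ψ : AddChar A M)
    (s : Finset ι) (g : ι → A) : ψ (∑ k ∈ s, g k) = ∏ k ∈ s, ψ (g k) :=
  map_prod ψ.toMonoidHom (fun k => Multiplicative.ofAdd (g k)) s

theorem sum_addChar_mul_eq_zero {R K : Type*} [CommRing R] [Fintype R] [CommRing K] [IsDomain K]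
    {ψ : AddChar R K} (hψ : ψ.IsPrimitive) {b : R} (hb : b ≠ 0) : ∑ x, ψ (x * b) = 0 := by
  classical
  simpa only [if_neg hb, Nat.cast_zero] using AddChar.sum_mulShift b hψ

/-- The discrete Fourier transform of `a : (ι → R) → K` with kernel `ψ (i ⬝ᵥ j)`, not normalised
and without a sign in the exponent. -/
def fourierTransform {R K ι : Type*} [Semiring R] [Fintype R] [Semiring K] [Fintype ι]
    [DecidableEq ι] (ψ : AddChar R K) (a : (ι → R) → K) (j : ι → R) : K :=
  ∑ i, a i * ψ (i ⬝ᵥ j)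

section CharCoeff

variable {R K : Type*} [CommRing R] [Fintype R] [Field K]

/-- The coefficient of the character `x ↦ ψ (x * l)` in the expansion of `g` in the characters
obtained from `ψ`. The normalising factor is `0⁻¹ = 0` when `|R|` vanishes in `K`. -/
def charCoeff (ψ : AddChar R K) (g : R → K) (l : R) : K :=
  (Fintype.card R : K)⁻¹ * ∑ x, g x * ψ (-(x * l))

theorem sum_charCoeff_mul [NeZero (Fintype.card R : K)] {ψ : AddChar R K}
    (hψ : ψ.IsPrimitive) (g : R → K) (y : R) :
    ∑ l, charCoeff ψ g l * ψ (y * l) = g y := by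
  classical
  have orthogonality (x : R) :
      ∑ l, ψ (-(x * l)) * ψ (y * l) = if x = y then (Fintype.card R : K) else 0 := by
    calc ∑ l, ψ (-(x * l)) * ψ (y * l) = ∑ l, ψ (l * (y - x)) :=
          Finset.sum_congr rfl fun l _ => by
            rw [← AddChar.map_add_eq_mul]
            ring_nf
      _ = if x = y then (Fintype.card R : K) else 0 := by
          rw [AddChar.sum_mulShift _ hψ]
          simp only [sub_eq_zero, eq_comm, Nat.cast_ite, Nat.cast_zero]
  calc ∑ l, charCoeff ψ g l * ψ (y * l)
      = (Fintype.card R : K)⁻¹ * ∑ x, g x * ∑ l, ψ (-(x * l)) * ψ (y * l) := by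
        simp only [charCoeff, Finset.mul_sum, Finset.sum_mul, mul_assoc]
        exact Finset.sum_comm
    _ = (Fintype.card R : K)⁻¹ * (g y * Fintype.card R) := by
        simp only [orthogonality, mul_ite, mul_zero, Finset.sum_ite_eq', Finset.mem_univ, if_true]
    _ = g y := by
        rw [mul_comm, mul_inv_cancel_right₀ (NeZero.ne _)]

theorem eq_zero_iff_of_charCoeff_comp_perm_ne_zero {ψ : AddChar R K} (hψ : ψ.IsPrimitive)
    (σ : Equiv.Perm R) {j l : R} (h : charCoeff ψ (fun x => ψ (σ x * j)) l ≠ 0) :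
    l = 0 ↔ j = 0 := by
  have hsum := right_ne_zero_of_mul h
  constructor
  · rintro rfl
    by_contra hj
    apply hsum
    calc ∑ x, ψ (σ x * j) * ψ (-(x * 0)) = ∑ x, ψ (σ x * j) := by
          simp only [mul_zero, neg_zero, AddChar.map_zero_eq_one, mul_one]
      _ = ∑ x, ψ (x * j) := Equiv.sum_comp σ fun x => ψ (x * j)
      _ = 0 := sum_addChar_mul_eq_zero hψ hj
  · rintro rfl
    by_contra hl
    apply hsum
    calc ∑ x, ψ (σ x * 0) * ψ (-(x * l)) = ∑ x, ψ (x * -l) := by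
          simp only [mul_zero, AddChar.map_zero_eq_one, one_mul, mul_neg]
      _ = 0 := sum_addChar_mul_eq_zero hψ (neg_ne_zero.mpr hl)

end CharCoeff

section HammingNorm

variable {ι R : Type*} [Fintype ι] [Zero R] [DecidableEq R]

theorem hammingNorm_congr {x y : ι → R} (h : ∀ k, x k = 0 ↔ y k = 0) :
    hammingNorm x = hammingNorm y := by
  simp only [hammingNorm, ne_eq, h]

theorem hammingNorm_comp_perm (x : ι → R) (π : Equiv.Perm ι) :
    hammingNorm (x ∘ π) = hammingNorm x :=
  Finset.card_equiv π fun k => by simp only [Finset.mem_filter_univ, Function.comp_apply]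

end HammingNorm

section ProductAction

variable {R K ι : Type*} [CommRing R] [Fintype R] [Field K] [Fintype ι] [DecidableEq ι]

theorem addChar_dotProduct_productAction [NeZero (Fintype.card R : K)]
    {ψ : AddChar R K} (hψ : ψ.IsPrimitive) (σ : ι → Equiv.Perm R) (π : Equiv.Perm ι)
    (x j : ι → R) :
    ψ ((fun k => σ k (x (π⁻¹ k))) ⬝ᵥ j) =
      ∑ l : ι → R, (∏ k, charCoeff ψ (fun y => ψ (σ k y * j k)) (l k)) * ψ (x ⬝ᵥ l ∘ π) := by
  calc ψ ((fun k => σ k (x (π⁻¹ k))) ⬝ᵥ j)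
      = ∏ k, ∑ l, charCoeff ψ (fun y => ψ (σ k y * j k)) l * ψ (x (π⁻¹ k) * l) := by
        simp only [dotProduct, addChar_map_sum, sum_charCoeff_mul hψ]
    _ = ∑ l : ι → R, (∏ k, charCoeff ψ (fun y => ψ (σ k y * j k)) (l k)) *
          ψ (x ∘ π.symm ⬝ᵥ l) := by
        simp only [Fintype.prod_sum, Finset.prod_mul_distrib, dotProduct,
          addChar_map_sum, Function.comp_apply, Equiv.Perm.inv_def]
    _ = _ := by simp only [comp_equiv_symm_dotProduct]

theorem fourierTransform_comp_symm [NeZero (Fintype.card R : K)]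
    {ψ : AddChar R K} (hψ : ψ.IsPrimitive) {f : Equiv.Perm (ι → R)} {σ : ι → Equiv.Perm R}
    {π : Equiv.Perm ι} (hf : ∀ x k, f x k = σ k (x (π⁻¹ k))) (a : (ι → R) → K) (j : ι → R) :
    fourierTransform ψ (a ∘ f.symm) j =
      ∑ l : ι → R, (∏ k, charCoeff ψ (fun y => ψ (σ k y * j k)) (l k)) *
        fourierTransform ψ a (l ∘ π) := by
  have hf' (x : ι → R) : f x = fun k => σ k (x (π⁻¹ k)) := funext (hf x)
  calc fourierTransform ψ (a ∘ f.symm) j = ∑ x, a x * ψ (f x ⬝ᵥ j) := by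
        rw [fourierTransform, ← Equiv.sum_comp f]
        simp only [Function.comp_apply, Equiv.symm_apply_apply]
    _ = _ := by
        simp only [hf', addChar_dotProduct_productAction hψ, fourierTransform, Finset.mul_sum]
        rw [Finset.sum_comm]
        simp only [mul_left_comm]

theorem fourierTransform_comp_symm_eq_zero [DecidableEq R] [NeZero (Fintype.card R : K)]
    {ψ : AddChar R K} (hψ : ψ.IsPrimitive) {f : Equiv.Perm (ι → R)} {σ : ι → Equiv.Perm R}
    {π : Equiv.Perm ι} (hf : ∀ x k, f x k = σ k (x (π⁻¹ k))) {a : (ι → R) → K} {j : ι → R}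
    (ha : ∀ l, hammingNorm l = hammingNorm j → fourierTransform ψ a l = 0) :
    fourierTransform ψ (a ∘ f.symm) j = 0 := by
  rw [fourierTransform_comp_symm hψ hf]
  refine Finset.sum_eq_zero fun l _ => mul_eq_zero.mpr (or_iff_not_imp_left.mpr fun hl => ?_)
  have hsupport (k : ι) : l k = 0 ↔ j k = 0 :=
    eq_zero_iff_of_charCoeff_comp_perm_ne_zero hψ (σ k)
      (Finset.prod_ne_zero_iff.mp hl k (Finset.mem_univ k))
  exact ha _ ((hammingNorm_comp_perm l π).trans (hammingNorm_congr hsupport))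

end ProductAction

theorem mem_codeAut_of_forall_comp_symm_mem {I : Type} [Finite I] {C : Set (I → ZMod 2)}
    {f : Equiv.Perm I} (h : ∀ c ∈ C, c ∘ f.symm ∈ C) : f ∈ codeAut C := by
  have hinj : Function.Injective fun c : I → ZMod 2 => c ∘ f.symm :=
    f.symm.surjective.injective_comp_right
  exact Set.eq_of_subset_of_ncard_le (Set.image_subset_iff.mpr h)
    (Set.ncard_image_of_injective C hinj).ge

theorem mem_abelianCode_iff_s10 {n m : ℕ} [NeZero n] {W : Set ℕ} {K : Type} [Field K] {α : K}
    (hα : α ^ n = 1) {a : (Fin m → ZMod n) → ZMod 2} :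
    a ∈ abelianCode n m W K α ↔ ∀ j, hammingNorm j ∉ W →
      fourierTransform (AddChar.zmodChar n hα) (fun i => if a i = 1 then 1 else 0) j = 0 :=
  Iff.rfl

theorem statement10_general (n m : ℕ) [NeZero n] (W : Set ℕ) (K : Type) [Field K] (α : K)
    (hα : IsPrimitiveRoot α n) :
    wreathPermSet (ZMod n) m ⊆ codeAut (abelianCode n m W K α) := by
  rintro f ⟨σ, π, hf⟩
  have hψ := AddChar.zmodChar_primitive_of_primitive_root n hα
  have : NeZero (Fintype.card (ZMod n) : K) := by
    rw [ZMod.card]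
    exact hα.neZero'
  refine mem_codeAut_of_forall_comp_symm_mem fun a ha => ?_
  rw [mem_abelianCode_iff_s10 hα.pow_eq_one] at ha ⊢
  intro j hj
  exact fourierTransform_comp_symm_eq_zero hψ hf fun l hl => ha l (hl ▸ hj)

/-- For odd `n ≥ 3`, `m ≥ 1` and any `W ⊆ {0, 1, …, m}`, the wreath
product `S_n ≀ S_m` in its product action on `Z_n^m` is contained in the automorphism group
of the abelian code `C(n, m, W)`. -/
theorem statement10 (n m : ℕ) [NeZero n] (hn : 3 ≤ n) (hodd : Odd n) (hm : 1 ≤ m)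
    (W : Set ℕ) (hW : W ⊆ Set.Iic m)
    (K : Type) [Field K] [CharP K 2] (α : K) (hα : IsPrimitiveRoot α n) :
    wreathPermSet (ZMod n) m ⊆ codeAut (abelianCode n m W K α) :=
  statement10_general n m W K α hα
end

section
/- Let C be a binary linear code of block length N whose automorphism group is the full symmetric group S_N. Then C is one of exactly four codes: the zero code {0}, the repetition code {0, 1…1}, the single parity check code (all even-weight vectors in F_2^N), or the full space F_2^N. -/
open Matrix

/-!
If a permutation-invariant code contains a word `c` with `c i ≠ c j`, then subtracting `c` from its
image under the transposition of `i` and `j` leaves a nonzero multiple of `eᵢ - eⱼ`. Moving `i` by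
further transpositions gives every `eₐ - eⱼ`, and these span the words with coordinate sum zero.
Hence an invariant code either consists of constant words or contains all words of sum zero. In the
lattice of subspaces the constant words form an atom and the words of sum zero a coatom, which
leaves only four possibilities.
-/

section Definitions

variable {ι α : Type*}

/-- A code is permutation invariant if it is closed under all rearrangements of coordinates. The
alphabet `α` is arbitrary, unlike for `codeAut`, which is tied to `ZMod 2`. -/
def IsPermInvariant (C : Set (ι → α)) : Prop :=
  ∀ (π : Equiv.Perm ι), ∀ c ∈ C, c ∘ π ∈ C

variable (R ι : Type*) [Semiring R]

/-- The repetition code over the alphabet `R`, encoded as the span of the all-ones word. -/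
def repetitionCode : Submodule R (ι → R) :=
  Submodule.span R {1}

/-- The single parity check code over the alphabet `R`, encoded as the kernel of the coordinate
sum. -/
def parityCheckCode [Fintype ι] : Submodule R (ι → R) :=
  LinearMap.ker (∑ i, LinearMap.proj i : (ι → R) →ₗ[R] R)

end Definitions

theorem codeAut_eq_univ_iff {I : Type} {C : Set (I → ZMod 2)} :
    codeAut C = Set.univ ↔ IsPermInvariant C := by
  constructor
  · intro h π c hc
    have hπ : π.symm ∈ codeAut C := h ▸ Set.mem_univ _
    exact hπ.subset (Set.mem_image_of_mem _ hc)
  · refine fun h => Set.eq_univ_of_forall fun π => Set.Subset.antisymm ?_ fun c hc => ?_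
    · exact Set.image_subset_iff.2 (h π.symm)
    · exact ⟨c ∘ π, h π c hc, by simp [Function.comp_assoc]⟩

section Semiring

variable {R ι : Type*} [Semiring R]

theorem mem_repetitionCode {c : ι → R} : c ∈ repetitionCode R ι ↔ ∃ x, ∀ i, c i = x := by
  simp [repetitionCode, Submodule.mem_span_singleton, funext_iff, eq_comm]

theorem mem_parityCheckCode [Fintype ι] {c : ι → R} :
    c ∈ parityCheckCode R ι ↔ ∑ i, c i = 0 := by
  simp [parityCheckCode]

theorem coe_repetitionCode :
    (repetitionCode R ι : Set (ι → R)) = {c | ∃ x, ∀ i, c i = x} :=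
  Set.ext fun _ => mem_repetitionCode

theorem coe_parityCheckCode [Fintype ι] :
    (parityCheckCode R ι : Set (ι → R)) = {c | ∑ i, c i = 0} :=
  Set.ext fun _ => mem_parityCheckCode

end Semiring

section Ring

variable {R ι : Type*} [Ring R] [DecidableEq ι]

theorem comp_swap_sub_self (c : ι → R) (i j : ι) :
    c ∘ Equiv.swap i j - c = (c j - c i) • (Pi.single i 1 - Pi.single j 1) := by
  ext k
  simp only [Pi.sub_apply, Function.comp_apply, Pi.smul_apply, smul_eq_mul, Pi.single_apply,
    Equiv.swap_apply_def]
  split_ifs <;> simp_all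

theorem IsPermInvariant.single_sub_single_mem {C : Submodule R (ι → R)}
    (hC : IsPermInvariant (C : Set (ι → R))) {i j : ι} (hij : i ≠ j)
    (h : Pi.single i 1 - Pi.single j 1 ∈ C) (a : ι) :
    Pi.single a 1 - Pi.single j 1 ∈ C := by
  obtain rfl | haj := eq_or_ne a j
  · simp
  have hswap : (Pi.single i 1 - Pi.single j 1 : ι → R) ∘ Equiv.swap i a =
      Pi.single a 1 - Pi.single j 1 := by
    rw [Pi.sub_comp, Pi.single_comp_equiv, Pi.single_comp_equiv, Equiv.symm_swap,
      Equiv.swap_apply_left, Equiv.swap_apply_of_ne_of_ne hij.symm haj.symm]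
  exact hswap ▸ hC (Equiv.swap i a) _ h

theorem parityCheckCode_le_of_single_sub_single_mem [Fintype ι] {C : Submodule R (ι → R)}
    {j : ι} (h : ∀ a, Pi.single a 1 - Pi.single j 1 ∈ C) :
    parityCheckCode R ι ≤ C := by
  intro c hc
  have hsum : c = ∑ a, c a • (Pi.single a 1 - Pi.single j 1 : ι → R) := by
    rw [mem_parityCheckCode] at hc
    simp only [smul_sub, Finset.sum_sub_distrib, ← Finset.sum_smul, hc, zero_smul, sub_zero]
    exact pi_eq_sum_univ' c
  rw [hsum]
  exact C.sum_mem fun a _ => C.smul_mem _ (h a)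

end Ring

section DivisionRing

variable {K ι : Type*} [DivisionRing K]

theorem isAtom_repetitionCode [Nonempty ι] : IsAtom (repetitionCode K ι) :=
  nonzero_span_atom 1 one_ne_zero

variable [Fintype ι]

theorem isCoatom_parityCheckCode [Nonempty ι] : IsCoatom (parityCheckCode K ι) := by
  classical
  refine LinearMap.isCoatom_ker_of_surjective fun x => ?_
  exact ⟨Pi.single (Classical.arbitrary ι) x, by simp⟩

theorem IsPermInvariant.le_repetitionCode_or_parityCheckCode_le {C : Submodule K (ι → K)}
    (hC : IsPermInvariant (C : Set (ι → K))) :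
    C ≤ repetitionCode K ι ∨ parityCheckCode K ι ≤ C := by
  classical
  by_cases hconst : ∀ c ∈ C, ∀ i j, c i = c j
  · left
    intro c hc
    cases isEmpty_or_nonempty ι
    · exact mem_repetitionCode.2 ⟨0, isEmptyElim⟩
    · exact mem_repetitionCode.2 ⟨_, fun i => hconst c hc i (Classical.arbitrary ι)⟩
  · right
    push Not at hconst
    obtain ⟨c, hc, i, j, hne⟩ := hconst
    have hdiff : Pi.single i 1 - Pi.single j 1 ∈ C := by
      rw [← C.smul_mem_iff (sub_ne_zero.2 hne.symm), ← comp_swap_sub_self]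
      exact C.sub_mem (hC _ c hc) hc
    exact parityCheckCode_le_of_single_sub_single_mem
      (hC.single_sub_single_mem (ne_of_apply_ne c hne) hdiff)

theorem statement13_general {C : Submodule K (ι → K)} (hC : IsPermInvariant (C : Set (ι → K))) :
    C = ⊥ ∨ C = repetitionCode K ι ∨ C = parityCheckCode K ι ∨ C = ⊤ := by
  cases isEmpty_or_nonempty ι
  · exact Or.inl (Subsingleton.elim _ _)
  obtain hle | hle := hC.le_repetitionCode_or_parityCheckCode_le
  · have := isAtom_repetitionCode.le_iff.1 hle
    tauto
  · have := isCoatom_parityCheckCode.le_iff.1 hle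
    tauto

end DivisionRing

/-- A binary linear code of block length `N` whose automorphism group is
the full symmetric group `S_N` is one of: the zero code, the repetition code, the single
parity check code, or the full space `F_2^N`. -/
theorem statement13 (N : ℕ) (C : Submodule (ZMod 2) (Fin N → ZMod 2))
    (h : codeAut (C : Set (Fin N → ZMod 2)) = Set.univ) :
    (C : Set (Fin N → ZMod 2)) = {0} ∨
    (C : Set (Fin N → ZMod 2)) = {c | ∃ x : ZMod 2, ∀ i, c i = x} ∨
    (C : Set (Fin N → ZMod 2)) = {c | ∑ i, c i = 0} ∨
    (C : Set (Fin N → ZMod 2)) = Set.univ := by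
  simpa only [← SetLike.coe_set_eq, Submodule.bot_coe, Submodule.top_coe, coe_repetitionCode,
    coe_parityCheckCode] using statement13_general (codeAut_eq_univ_iff.1 h)
end
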